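/- arXiv:1605.04538 — 3 statements merged into one kernel-verified Lean document; each statement's English description precedes it below -/
import Mathlib

section
/- There is an absolute constant C>0 with the following property. Let G=(V,E,ω) be a finite weighted undirected graph on n≥2 vertices all of whose edge weights are at least 1 and all of whose finite pairwise distances are at most Λ, where Λ≥2. Let κ be an integer with 2≤κ≤(log₂ n)/4, let ρ be a real with 1/κ≤ρ<1/2, and let ε be a real with 0<ε≤1. Then there exists a (β,ε)-hopset H for G with at most C·n^{1+1/κ}·log₂Λ edges, where β = ⌈(C·(log₂κ + 1/ρ)/ε)^{log₂κ + 1/ρ}⌉. -/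
open scoped ENNReal Classical

/-- `hopDist w t u v` is the minimum total weight of a `u`–`v` path with at most `t` edges,
in the weighted graph whose (symmetric) weight function is `w` (`⊤` meaning "no edge"). -/
noncomputable def hopDist {V : Type*} (w : V → V → ℝ≥0∞) : ℕ → V → V → ℝ≥0∞
  | 0, u, v => if u = v then 0 else ⊤
  | t + 1, u, v => min (hopDist w t u v) (⨅ x : V, w u x + hopDist w t x v)

/-- Shortest-path distance. -/
noncomputable def gDist {V : Type*} (w : V → V → ℝ≥0∞) (u v : V) : ℝ≥0∞ :=
  ⨅ t : ℕ, hopDist w t u v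

/-- Union of two weighted edge sets, keeping the smaller weight on parallel edges. -/
noncomputable def unionW {V : Type*} (w₁ w₂ : V → V → ℝ≥0∞) (u v : V) : ℝ≥0∞ :=
  min (w₁ u v) (w₂ u v)

/-- Number of (undirected) edges of a weighted edge set. -/
noncomputable def edgeCount {V : Type*} (w : V → V → ℝ≥0∞) : ℕ :=
  Set.ncard {p : Sym2 V | ∃ u v : V, p = s(u, v) ∧ u ≠ v ∧ w u v ≠ ⊤}

/-- `H` is a `(β, ε)`-hopset for `G`. -/
def IsHopset {V : Type*} (wG wH : V → V → ℝ≥0∞) (β : ℕ) (ε : ℝ) : Prop :=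
  ∀ u v : V, gDist wG u v ≤ hopDist (unionW wG wH) β u v ∧
    hopDist (unionW wG wH) β u v ≤ ENNReal.ofReal (1 + ε) * gDist wG u v

namespace HopsetProof

section Basic
variable {V : Type} (w : V → V → ℝ≥0∞)

lemma hop_succ_le (t : ℕ) (u v : V) : hopDist w (t+1) u v ≤ hopDist w t u v := by
  simp only [hopDist]; exact min_le_left _ _

lemma hop_mono {s t : ℕ} (h : s ≤ t) (u v : V) : hopDist w t u v ≤ hopDist w s u v := by
  induction h with
  | refl => exact le_rfl
  | step _ ih => exact (hop_succ_le w _ u v).trans ih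

lemma hop_self (t : ℕ) (u : V) : hopDist w t u u = 0 := by
  have h := hop_mono w (Nat.zero_le t) u u
  simpa [hopDist] using h

lemma hop_step (t : ℕ) (u x v : V) : hopDist w (t+1) u v ≤ w u x + hopDist w t x v := by
  simp only [hopDist]
  exact (min_le_right _ _).trans (iInf_le _ x)

lemma hop_one (u v : V) : hopDist w 1 u v ≤ w u v := by
  have h := hop_step w 0 u v v
  simpa [hopDist] using h

lemma hop_add (s t : ℕ) (u x v : V) :
    hopDist w (s+t) u v ≤ hopDist w s u x + hopDist w t x v := by
  induction s generalizing u with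
  | zero =>
    by_cases h : u = x
    · subst h; simp [hopDist]
    · simp [hopDist, h]
  | succ s ih =>
    have e : s + 1 + t = (s + t) + 1 := by omega
    rw [e]
    conv_rhs => rw [hopDist]
    rw [min_add, ENNReal.iInf_add]
    refine le_min ((hop_succ_le w _ u v).trans (ih u)) (le_iInf fun y => ?_)
    refine (hop_step w (s+t) u y v).trans ?_
    rw [add_assoc]
    gcongr
    exact ih y

lemma hop_add' {s t r : ℕ} (h : s + t ≤ r) (u x v : V) :
    hopDist w r u v ≤ hopDist w s u x + hopDist w t x v :=
  (hop_mono w h u v).trans (hop_add w s t u x v)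

lemma hop_symm (hs : ∀ u v, w u v = w v u) (t : ℕ) (u v : V) :
    hopDist w t u v = hopDist w t v u := by
  have key : ∀ t u v, hopDist w t u v ≤ hopDist w t v u := by
    intro t
    induction t with
    | zero => intro u v; simp only [hopDist, eq_comm]; exact le_rfl
    | succ t ih =>
      intro u v
      conv_rhs => rw [hopDist]
      refine le_min ((hop_succ_le w _ u v).trans (ih u v)) (le_iInf fun x => ?_)
      refine (hop_add w t 1 u x v).trans ?_
      rw [add_comm, hs v x]
      exact add_le_add (hop_one w x v) (ih u x)
  exact le_antisymm (key t u v) (key t v u)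

lemma g_le (t : ℕ) (u v : V) : gDist w u v ≤ hopDist w t u v := iInf_le _ t

lemma g_self (u : V) : gDist w u u = 0 := by
  have h := g_le w 0 u u
  simpa [hopDist] using h

lemma g_le_w (u v : V) : gDist w u v ≤ w u v := (g_le w 1 u v).trans (hop_one w u v)

lemma g_symm (hs : ∀ u v, w u v = w v u) (u v : V) : gDist w u v = gDist w v u := by
  unfold gDist
  exact iInf_congr fun t => hop_symm w hs t u v

lemma g_tri (u x v : V) : gDist w u v ≤ gDist w u x + gDist w x v := by
  conv_rhs => unfold gDist
  rw [ENNReal.iInf_add]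
  refine le_iInf fun s => ?_
  rw [ENNReal.add_iInf]
  exact le_iInf fun t => (g_le w (s+t) u v).trans (hop_add w s t u x v)

lemma g_step_le {u v : V} (huv : u ≠ v) : ⨅ x, (w u x + gDist w x v) ≤ gDist w u v := by
  conv_rhs => unfold gDist
  refine le_iInf fun t => ?_
  induction t with
  | zero => simp [hopDist, huv]
  | succ t ih =>
    conv_rhs => rw [hopDist]
    refine le_min ih (le_iInf fun x => ?_)
    refine (iInf_le _ x).trans ?_
    gcongr
    exact g_le w t x v

lemma g_next [Fintype V] {u v : V} (huv : u ≠ v) :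
    ∃ x, w u x + gDist w x v = gDist w u v := by
  haveI : Nonempty V := ⟨u⟩
  obtain ⟨x, hx⟩ := Finite.exists_min (fun x => w u x + gDist w x v)
  refine ⟨x, le_antisymm ((le_iInf hx).trans (g_step_le w huv)) ?_⟩
  exact (g_tri w u x v).trans (by gcongr; exact g_le_w w u x)

lemma g_pos (h1 : ∀ u v, w u v ≠ ⊤ → 1 ≤ w u v) {u v : V} (huv : u ≠ v) :
    1 ≤ gDist w u v := by
  refine le_trans ?_ (g_step_le w huv)
  refine le_iInf fun x => ?_
  by_cases h : w u x = ⊤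
  · simp [h]
  · exact (h1 u x h).trans le_self_add

lemma jump [Fintype V] (h1 : ∀ u v, w u v ≠ ⊤ → 1 ≤ w u v) (x y : V)
    (hfin : gDist w x y ≠ ⊤) (τ : ℝ≥0∞) :
    gDist w x y ≤ τ ∨ ∃ a b, gDist w x a ≤ τ ∧ τ ≤ gDist w x a + w a b ∧
      gDist w x a + w a b + gDist w b y = gDist w x y := by
  let S : Finset V := Finset.univ.filter
    (fun a => gDist w x a + gDist w a y = gDist w x y ∧ gDist w x a ≤ τ)
  have hS : S.Nonempty := ⟨x, by simp [S, g_self]⟩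
  obtain ⟨a, haS, hmin⟩ := S.exists_min_image (fun a => gDist w a y) hS
  simp only [S, Finset.mem_filter, Finset.mem_univ, true_and] at haS hmin
  obtain ⟨ha, haτ⟩ := haS
  by_cases hay : a = y
  · left; rw [← hay]; exact haτ
  right
  obtain ⟨b, hb⟩ := g_next w hay
  have hafin : gDist w a y ≠ ⊤ := by
    intro h; rw [h] at ha; simp at ha; exact hfin ha.symm
  have hwfin : w a b ≠ ⊤ := by
    intro h; rw [h] at hb; simp at hb; exact hafin hb.symm
  have hbfin : gDist w b y ≠ ⊤ := by
    intro h; rw [h] at hb; simp at hb; exact hafin hb.symm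
  have htot : gDist w x a + w a b + gDist w b y = gDist w x y := by
    rw [add_assoc, hb, ha]
  refine ⟨a, b, haτ, ?_, htot⟩
  have hxb : gDist w x b ≤ gDist w x a + w a b :=
    (g_tri w x a b).trans (by gcongr; exact g_le_w w a b)
  by_contra hlt
  push Not at hlt
  have h2 := hmin b ⟨le_antisymm (by rw [← htot]; gcongr) (g_tri w x b y), hxb.trans hlt.le⟩
  rw [← hb] at h2
  have h3 : 1 + gDist w b y ≤ 0 + gDist w b y := by
    rw [zero_add]; exact le_trans (by gcongr; exact h1 a b hwfin) h2
  have h4 := (ENNReal.add_le_add_iff_right hbfin).1 h3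
  simp at h4

end Basic

section Chain
variable {V : Type} [Fintype V] (w W : V → V → ℝ≥0∞)

lemma chain (hs : ∀ u v, w u v = w v u) (hS : ∀ u v, W u v = W v u)
    (h1 : ∀ u v, w u v ≠ ⊤ → 1 ≤ w u v) (hWw : ∀ u v, W u v ≤ w u v)
    (h : ℕ) (c : ℝ≥0∞) (hc : 1 ≤ c) (A : Finset V)
    (P : ∀ x y, hopDist W h x y ≤ c * gDist w x y ∨
      ∃ z ∈ A, hopDist W h x z ≤ 2 * gDist w x y)
    (τ : ℝ≥0∞) (hτ : τ ≠ ⊤) (m : ℕ) (x y : V) (hxy : gDist w x y ≤ m * τ) :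
    hopDist W (m*(h+1)) x y ≤ c * gDist w x y ∨
    ∃ u v z z' : V, ∃ p q r : ℝ≥0∞, z ∈ A ∧ z' ∈ A ∧ p + q + r ≤ gDist w x y ∧
      gDist w x u ≤ p ∧ gDist w u v ≤ q ∧
      hopDist W (m*(h+1)) x u ≤ c * p ∧ hopDist W (m*(h+1)) v y ≤ c * r ∧
      hopDist W h u z ≤ 2 * τ ∧ hopDist W h v z' ≤ 2 * τ := by
  induction m generalizing x with
  | zero =>
    left
    have : x = y := by
      by_contra hne
      have := (g_pos w h1 hne).trans hxy
      simp at this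
    subst this
    simp [hop_self]
  | succ m ih =>
    have hfin : gDist w x y ≠ ⊤ := ne_top_of_le_ne_top (by finiteness) hxy
    have hh : h ≤ (m+1)*(h+1) := by nlinarith
    -- two-sided form of P
    have P2 : ∀ a, hopDist W h x a ≤ c * gDist w x a ∨
        ((∃ z ∈ A, hopDist W h x z ≤ 2 * gDist w x a) ∧
          ∃ z ∈ A, hopDist W h a z ≤ 2 * gDist w x a) := by
      intro a
      rcases P x a with h2 | h2
      · exact Or.inl h2
      rcases P a x with h3 | h3
      · left; rwa [hop_symm W hS, g_symm w hs x a]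
      · right; rw [g_symm w hs a x] at h3; exact ⟨h2, h3⟩
    rcases jump w h1 x y hfin τ with hle | ⟨a, b, haτ, hτab, htot⟩
    · rcases P2 y with h2 | ⟨⟨z, hz, hz2⟩, z', hz', hz2'⟩
      · left; exact (hop_mono W hh x y).trans h2
      · right
        refine ⟨x, y, z, z', 0, gDist w x y, 0, hz, hz', by simp, by simp [g_self], le_rfl,
          by simp [hop_self], by simp [hop_self], hz2.trans (by gcongr), hz2'.trans (by gcongr)⟩
    · have hby : gDist w b y ≤ m * τ := by
        have : τ + gDist w b y ≤ τ + m * τ := by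
          calc τ + gDist w b y ≤ gDist w x a + w a b + gDist w b y := by gcongr
            _ = gDist w x y := htot
            _ ≤ _ := hxy
            _ = τ + m * τ := by push_cast; ring
        exact (ENNReal.add_le_add_iff_left hτ).1 this
      -- the edge step
      have edge : ∀ v, hopDist W (m*(h+1)+1) a v ≤ w a b + hopDist W (m*(h+1)) b v := fun v =>
        (hop_step W _ a b v).trans (by gcongr; exact hWw a b)
      have e1 : h + (m*(h+1)+1) ≤ (m+1)*(h+1) := by nlinarith
      have e2 : m*(h+1) ≤ (m+1)*(h+1) := by nlinarith
      have e3 : m*(h+1)+1 ≤ (m+1)*(h+1) := by nlinarith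
      have front : ∀ v p, hopDist W h x a ≤ c * gDist w x a →
          hopDist W (m*(h+1)) b v ≤ c * p →
          hopDist W ((m+1)*(h+1)) x v ≤ c * (gDist w x a + w a b + p) := by
        intro v p k1 k2
        calc hopDist W ((m+1)*(h+1)) x v ≤ hopDist W h x a + hopDist W (m*(h+1)+1) a v :=
              hop_add' W e1 x a v
          _ ≤ c * gDist w x a + (w a b + c * p) := by
              gcongr; exact (edge v).trans (by gcongr)
          _ ≤ c * gDist w x a + (c * w a b + c * p) := by
              gcongr; exact le_mul_of_one_le_left' hc
          _ = _ := by ring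
      have gxb : gDist w x b ≤ gDist w x a + w a b :=
        (g_tri w x a b).trans (by gcongr; exact g_le_w w a b)
      rcases P2 a with h2 | ⟨⟨z, hz, hz2⟩, z', hz', hz2'⟩
      · rcases ih b hby with h3 | ⟨u, v, z, z', p, q, r, hz, hz', hpqr, hu, huv, hp, hr, hzz, hzz'⟩
        · left
          have := front y _ h2 h3
          rwa [htot] at this
        · right
          refine ⟨u, v, z, z', gDist w x a + w a b + p, q, r, hz, hz', ?_, ?_, huv,
            front u p h2 hp, (hop_mono W e2 v y).trans hr, hzz, hzz'⟩
          · rw [← htot]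
            calc _ = gDist w x a + w a b + (p + q + r) := by ring
              _ ≤ _ := by gcongr
          · exact (g_tri w x b u).trans (by gcongr)
      · rcases ih b hby with h3 | ⟨u, v, z2, z2', p, q, r, hz3, hz3', hpqr, hu, huv, hp, hr, hzz, hzz'⟩
        · right
          refine ⟨x, a, z, z', 0, gDist w x a, w a b + gDist w b y, hz, hz', ?_, by simp [g_self],
            le_rfl, by simp [hop_self], ?_, hz2.trans (by gcongr), hz2'.trans (by gcongr)⟩
          · rw [← htot, zero_add, add_assoc]
          · calc _ ≤ hopDist W (m*(h+1)+1) a y := hop_mono W e3 a y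
              _ ≤ w a b + hopDist W (m*(h+1)) b y := edge y
              _ ≤ c * w a b + c * gDist w b y := by
                gcongr; exact le_mul_of_one_le_left' hc
              _ = _ := by ring
        · right
          refine ⟨x, v, z, z2', 0, gDist w x a + w a b + p + q, r, hz, hz3', ?_, by simp [g_self],
            ?_, by simp [hop_self], (hop_mono W e2 v y).trans hr, hz2.trans (by gcongr), hzz'⟩
          · rw [← htot]
            calc _ = gDist w x a + w a b + (p + q + r) := by ring
              _ ≤ _ := by gcongr
          · calc gDist w x v ≤ gDist w x b + gDist w b v := g_tri w x b v
              _ ≤ gDist w x b + (gDist w b u + gDist w u v) := by gcongr; exact g_tri w b u v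
              _ ≤ gDist w x a + w a b + (p + q) := by gcongr
              _ = _ := by ring

lemma step (hs : ∀ u v, w u v = w v u) (hS : ∀ u v, W u v = W v u)
    (h1 : ∀ u v, w u v ≠ ⊤ → 1 ≤ w u v) (hWw : ∀ u v, W u v ≤ w u v)
    (hgW : ∀ t u v, gDist w u v ≤ hopDist W t u v)
    (h h' M : ℕ) (hM : 1 ≤ M) (hh' : 2*(M*(h+1)) + 2*h+1 ≤ h')
    (c : ℝ≥0∞) (hc : 1 ≤ c) (hc2 : c + 8 / M ≤ 2) (A B : Finset V)
    (P : ∀ x y, hopDist W h x y ≤ c * gDist w x y ∨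
      ∃ z ∈ A, hopDist W h x z ≤ 2 * gDist w x y)
    (Q : ∀ x ∈ A, ∀ y ∈ A, hopDist W 1 x y ≤ gDist w x y ∨
      ∃ z ∈ B, hopDist W 1 x z ≤ gDist w x y) (x y : V) :
    hopDist W h' x y ≤ (c + 8 / M) * gDist w x y ∨
      ∃ z ∈ B, hopDist W h' x z ≤ 2 * gDist w x y := by
  by_cases hfin : gDist w x y = ⊤
  · left
    rw [hfin, ENNReal.mul_top]
    · exact le_top
    · exact (lt_of_lt_of_le zero_lt_one (hc.trans le_self_add)).ne'
  have hM0 : (M : ℝ≥0∞) ≠ 0 := by exact_mod_cast (by omega : M ≠ 0)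
  have hMt : (M : ℝ≥0∞) ≠ ⊤ := by simp
  set τ : ℝ≥0∞ := gDist w x y / M with hτdef
  have hτ : τ ≠ ⊤ := ENNReal.div_ne_top hfin hM0
  have hMτ : M * τ = gDist w x y := ENNReal.mul_div_cancel hM0 hMt
  have h8 : 8 * τ = 8 / M * gDist w x y := by
    rw [hτdef, ENNReal.div_eq_inv_mul, ENNReal.div_eq_inv_mul]; ring
  rcases chain w W hs hS h1 hWw h c hc A P τ hτ M x y hMτ.ge with
    hg | ⟨u, v, z, z', p, q, r, hz, hz', hpqr, hu, huv, hp, hr, hzz, hzz'⟩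
  · left
    refine (hop_mono W (by nlinarith) x y).trans (hg.trans ?_)
    gcongr
    exact le_self_add
  have hzu : gDist w z u ≤ 2 * τ := by
    rw [g_symm w hs]; exact (hgW h u z).trans hzz
  have hvz : gDist w v z' ≤ 2 * τ := (hgW h v z').trans hzz'
  have hd : gDist w z z' ≤ 2 * τ + q + 2 * τ :=
    calc gDist w z z' ≤ gDist w z v + gDist w v z' := g_tri w _ _ _
      _ ≤ (gDist w z u + gDist w u v) + gDist w v z' := by gcongr; exact g_tri w _ _ _
      _ ≤ _ := by gcongr
  have hxz : hopDist W (M*(h+1) + h) x z ≤ c * p + 2 * τ :=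
    (hop_add W _ _ x u z).trans (by gcongr)
  have hzy : hopDist W (h + M*(h+1)) z' y ≤ 2 * τ + c * r :=
    (hop_add W _ _ z' v y).trans (by gcongr; rwa [hop_symm W hS])
  have hq : q ≤ c * q := le_mul_of_one_le_left' hc
  rcases Q z hz z' hz' with h3 | ⟨t, ht, h3⟩
  · left
    calc hopDist W h' x y ≤ hopDist W (M*(h+1)+h) x z + hopDist W (1 + (h + M*(h+1))) z y :=
          hop_add' W (by omega) x z y
      _ ≤ (c * p + 2 * τ) + ((2 * τ + q + 2 * τ) + (2 * τ + c * r)) := by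
          gcongr
          refine (hop_add W 1 _ z z' y).trans ?_
          gcongr
          exact h3.trans hd
      _ ≤ (c * p + 2 * τ) + ((2 * τ + c * q + 2 * τ) + (2 * τ + c * r)) := by gcongr
      _ = c * (p + q + r) + 8 * τ := by ring
      _ ≤ c * gDist w x y + 8 * τ := by gcongr
      _ = _ := by rw [h8]; ring
  · right
    refine ⟨t, ht, ?_⟩
    calc hopDist W h' x t ≤ hopDist W (M*(h+1)+h) x z + hopDist W 1 z t :=
          hop_add' W (by omega) x z t
      _ ≤ (c * p + 2 * τ) + (2 * τ + q + 2 * τ) := by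
          gcongr
          exact h3.trans hd
      _ ≤ (c * p + 2 * τ) + (2 * τ + c * q + 2 * τ) + (c * r + 2 * τ) := by
          refine le_trans ?_ le_self_add
          gcongr
      _ = c * (p + q + r) + 8 * τ := by ring
      _ ≤ c * gDist w x y + 8 * τ := by gcongr
      _ = (c + 8 / M) * gDist w x y := by rw [h8]; ring
      _ ≤ _ := by gcongr

lemma levels (hs : ∀ u v, w u v = w v u) (hS : ∀ u v, W u v = W v u)
    (h1 : ∀ u v, w u v ≠ ⊤ → 1 ≤ w u v) (hWw : ∀ u v, W u v ≤ w u v)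
    (hgW : ∀ t u v, gDist w u v ≤ hopDist W t u v)
    (M k : ℕ) (hM : 1 ≤ M) (hkM : 8 * k ≤ M) (A : ℕ → Finset V) (hA0 : A 0 = Finset.univ)
    (Q : ∀ i ≤ k, ∀ x ∈ A i, ∀ y ∈ A i, hopDist W 1 x y ≤ gDist w x y ∨
      ∃ z ∈ A (i+1), hopDist W 1 x z ≤ gDist w x y) (i : ℕ) (hi : i ≤ k) (x y : V) :
    hopDist W ((7*M)^i) x y ≤ (1 + i * (8 / M)) * gDist w x y ∨
      ∃ z ∈ A (i+1), hopDist W ((7*M)^i) x z ≤ 2 * gDist w x y := by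
  induction i generalizing x y with
  | zero =>
    rcases Q 0 hi x (by simp [hA0]) y (by simp [hA0]) with h | ⟨z, hz, h⟩
    · left; simpa using h
    · right
      refine ⟨z, hz, ?_⟩
      rw [pow_zero]
      exact h.trans (le_mul_of_one_le_left' (by norm_num))
  | succ i ih =>
    have hM0 : (M : ℝ≥0∞) ≠ 0 := by exact_mod_cast (by omega : M ≠ 0)
    have hMt : (M : ℝ≥0∞) ≠ ⊤ := by simp
    have key := step w W hs hS h1 hWw hgW ((7*M)^i) ((7*M)^(i+1)) M hM ?_
      (1 + i * (8 / M)) le_self_add ?_ (A (i+1)) (A (i+2)) (ih (by omega)) (Q (i+1) hi) x y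
    · have e : (1 + (i:ℝ≥0∞) * (8 / M)) + 8 / M = 1 + ((i+1 : ℕ) : ℝ≥0∞) * (8 / M) := by
        push_cast; ring
      rw [e] at key
      exact key
    · have : 1 ≤ (7*M)^i := Nat.one_le_pow _ _ (by omega)
      rw [pow_succ]
      nlinarith
    · have e : (1 + (i:ℝ≥0∞) * (8 / M)) + 8 / M = 1 + ((8 * (i+1) : ℕ) : ℝ≥0∞) / M := by
        push_cast; simp only [ENNReal.div_eq_inv_mul]; ring
      rw [e]
      have : ((8 * (i+1) : ℕ) : ℝ≥0∞) / M ≤ 1 := by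
        apply ENNReal.div_le_of_le_mul
        rw [one_mul]
        exact_mod_cast (by omega : 8 * (i+1) ≤ M)
      calc _ ≤ (1:ℝ≥0∞) + 1 := by gcongr
        _ = 2 := by norm_num

end Chain

section Sampling

lemma rank_sum {V : Type} (A : Finset V) (g : V → ℝ≥0∞) (t : ℕ) :
    (∑ y ∈ A, (A.filter (fun z => g y < g z)).card ^ t) * (t+1) ≤ A.card ^ (t+1) := by
  induction A using Finset.induction_on_min_value g with
  | empty => simp
  | insert a s has hmin ih =>
    rw [Finset.sum_insert has, Finset.card_insert_of_notMem has]
    have e1 : ((insert a s).filter (fun z => g a < g z)).card ≤ s.card := by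
      rw [Finset.filter_insert, if_neg (lt_irrefl _)]
      exact Finset.card_filter_le _ _
    have e2 : ∀ y ∈ s, ((insert a s).filter (fun z => g y < g z)).card ^ t
        = (s.filter (fun z => g y < g z)).card ^ t := by
      intro y hy
      rw [Finset.filter_insert, if_neg (not_lt.2 (hmin y hy))]
    rw [Finset.sum_congr rfl e2]
    have e3 := Nat.pow_le_pow_left e1 t
    have bern : ∀ a : ℕ, a ^ t * (t+1) + a^(t+1) ≤ (a+1)^(t+1) := by
      intro a
      have h : ∀ t : ℕ, a ^ t * (t+1) + a^(t+1) ≤ (a+1)^(t+1) := by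
        intro t
        induction t with
        | zero => simp; omega
        | succ t ih =>
          have := Nat.mul_le_mul_right (a+1) ih
          calc _ ≤ (a ^ t * (t+1) + a^(t+1)) * (a+1) := by
                push_cast
                have : 0 ≤ a^t * (t+1) := Nat.zero_le _
                ring_nf
                nlinarith
            _ ≤ _ := this
            _ = _ := by ring
      exact h t
    have b := bern s.card
    nlinarith

lemma sample {V : Type} (A : Finset V) (d : V → V → ℝ≥0∞) (t : ℕ) :
    ∃ B : Finset V, B.card ≤ t ∧
      ((A ×ˢ A).filter (fun p => ∀ z ∈ B, d p.1 p.2 < d p.1 z)).card * (t+1) ≤ A.card ^ 2 := by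
  rcases A.eq_empty_or_nonempty with rfl | hA
  · exact ⟨∅, by simp, by simp⟩
  let Ω : Finset (Fin t → V) := Fintype.piFinset (fun _ => A)
  have hΩ : Ω.Nonempty := by
    obtain ⟨a, ha⟩ := hA
    exact ⟨fun _ => a, by simp [Ω, ha]⟩
  have hΩc : Ω.card = A.card ^ t := by simp [Ω]
  have hsum : ∑ f ∈ Ω, ((A ×ˢ A).filter (fun p => ∀ j, d p.1 p.2 < d p.1 (f j))).card * (t+1)
      ≤ ∑ f ∈ Ω, A.card ^ 2 := by
    rw [← Finset.sum_mul, Finset.sum_const, hΩc, smul_eq_mul]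
    have swap : ∑ f ∈ Ω, ((A ×ˢ A).filter (fun p => ∀ j, d p.1 p.2 < d p.1 (f j))).card
        = ∑ p ∈ A ×ˢ A, (Ω.filter (fun f => ∀ j, d p.1 p.2 < d p.1 (f j))).card := by
      simp only [Finset.card_filter]
      exact Finset.sum_comm
    rw [swap]
    have cnt : ∀ p : V × V, (Ω.filter (fun f => ∀ j, d p.1 p.2 < d p.1 (f j))).card
        = (A.filter (fun z => d p.1 p.2 < d p.1 z)).card ^ t := by
      intro p
      have : Ω.filter (fun f => ∀ j, d p.1 p.2 < d p.1 (f j))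
          = Fintype.piFinset (fun _ : Fin t => A.filter (fun z => d p.1 p.2 < d p.1 z)) := by
        ext f
        simp [Ω, forall_and]
      rw [this]; simp
    simp only [cnt]
    rw [Finset.sum_product, Finset.sum_mul]
    calc _ ≤ ∑ x ∈ A, A.card ^ (t+1) := Finset.sum_le_sum fun x _ => rank_sum A (d x) t
      _ = A.card ^ t * A.card ^ 2 := by rw [Finset.sum_const, smul_eq_mul]; ring
  obtain ⟨f, _, hf⟩ := Finset.exists_le_of_sum_le hΩ hsum
  refine ⟨Finset.univ.image f, ?_, ?_⟩
  · exact Finset.card_image_le.trans (by simp)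
  · simpa using hf

lemma level_exists {V : Type} (A : Finset V) (d : V → V → ℝ≥0∞) (t : ℕ) :
    ∃ (B : Finset V) (F : Finset (V × V)), B.card ≤ t ∧
      F.card * (t+1) ≤ A.card ^ 2 + A.card * (t+1) ∧
      ∀ x ∈ A, ∀ y ∈ A, (x, y) ∈ F ∨ ∃ z ∈ B, d x z ≤ d x y ∧ (x, z) ∈ F := by
  obtain ⟨B, hB, hc⟩ := sample A d t
  have hpiv : ∃ piv : V → V, ∀ x, B.Nonempty → piv x ∈ B ∧ ∀ z ∈ B, d x (piv x) ≤ d x z := by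
    rcases B.eq_empty_or_nonempty with rfl | hne
    · exact ⟨id, by simp⟩
    · choose piv h1 h2 using fun x => B.exists_min_image (d x) hne
      exact ⟨piv, fun x _ => ⟨h1 x, h2 x⟩⟩
  obtain ⟨piv, hpiv⟩ := hpiv
  refine ⟨B, (A ×ˢ A).filter (fun p => ∀ z ∈ B, d p.1 p.2 < d p.1 z) ∪
    A.image (fun x => (x, piv x)), hB, ?_, ?_⟩
  · refine (Nat.mul_le_mul_right _ ((Finset.card_union_le _ _).trans
      (Nat.add_le_add_left Finset.card_image_le _))).trans ?_
    rw [add_mul]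
    refine Nat.add_le_add_right (le_trans (le_of_eq ?_) hc) _
    congr!
  · intro x hx y hy
    by_cases h : ∀ z ∈ B, d x y < d x z
    · left
      simp [hx, hy]
      left; exact h
    · right
      push Not at h
      obtain ⟨z, hz, hzy⟩ := h
      obtain ⟨k1, k2⟩ := hpiv x ⟨z, hz⟩
      refine ⟨piv x, k1, (k2 z hz).trans hzy, ?_⟩
      simp only [Finset.mem_union, Finset.mem_image]
      right; exact ⟨x, hx, rfl⟩

lemma hierarchy {V : Type} [Fintype V] (d : V → V → ℝ≥0∞) (t : ℕ → ℕ) :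
    ∃ (A : ℕ → Finset V) (F : ℕ → Finset (V × V)), A 0 = Finset.univ ∧
      (∀ i, (A (i+1)).card ≤ t (i+1)) ∧
      (∀ i, (F i).card * (t (i+1) + 1) ≤ (A i).card ^ 2 + (A i).card * (t (i+1) + 1)) ∧
      ∀ i, ∀ x ∈ A i, ∀ y ∈ A i, (x, y) ∈ F i ∨
        ∃ z ∈ A (i+1), d x z ≤ d x y ∧ (x, z) ∈ F i := by
  choose B F h1 h2 h3 using fun (A : Finset V) (t : ℕ) => level_exists A d t
  let A : ℕ → Finset V := fun i => Nat.rec Finset.univ (fun i a => B a (t (i+1))) i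
  exact ⟨A, fun i => F (A i) (t (i+1)), rfl, fun i => h1 _ _, fun i => h2 _ _, fun i => h3 _ _⟩

/-- Size of the hierarchy. -/
lemma hierarchy_size {V : Type} [Fintype V] (d : V → V → ℝ≥0∞) (n κ k : ℕ)
    (hn : Fintype.card V = n) (hn1 : 1 ≤ n) (hκ : 1 ≤ κ) (hk : κ + 1 ≤ 2 ^ (k+1)) :
    ∃ (A : ℕ → Finset V) (F : ℕ → Finset (V × V)), A 0 = Finset.univ ∧ A (k+1) = ∅ ∧
      ((((Finset.range (k+1)).biUnion F).card : ℕ) : ℝ) ≤ 6 * (n:ℝ) ^ (1 + 1 / (κ:ℝ)) ∧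
      ∀ i, ∀ x ∈ A i, ∀ y ∈ A i, (x, y) ∈ F i ∨
        ∃ z ∈ A (i+1), d x z ≤ d x y ∧ (x, z) ∈ F i := by
  have hnR : (1:ℝ) ≤ n := by exact_mod_cast hn1
  have hn0 : (0:ℝ) < n := by linarith
  set s : ℝ := (n:ℝ) ^ (1 / (κ:ℝ)) with hsdef
  have hs1 : 1 ≤ s := Real.one_le_rpow hnR (by positivity)
  have hs0 : 0 < s := by linarith
  have hsκ : s ^ κ = n := by
    rw [hsdef, ← Real.rpow_natCast, ← Real.rpow_mul hn0.le, one_div,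
      inv_mul_cancel₀ (by positivity), Real.rpow_one]
  have hns : (n:ℝ) ^ (1 + 1 / (κ:ℝ)) = n * s := by
    rw [Real.rpow_add hn0, Real.rpow_one]
  let X : ℕ → ℝ := fun i => n * s / (s ^ (2^i) * 2 ^ i)
  have hX0 : ∀ i, 0 < X i := fun i => by simp only [X]; positivity
  have hXn : ∀ i, X i ≤ n * (1/2)^i := by
    intro i
    simp only [X]
    rw [div_le_iff₀ (by positivity)]
    have : s ≤ s ^ (2^i) := le_self_pow₀ hs1 (by positivity)
    calc (n:ℝ) * s ≤ n * s ^ (2^i) := by gcongr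
      _ = n * (1/2)^i * (s ^ (2^i) * 2 ^ i) := by
        rw [one_div, inv_pow]; field_simp
  have hXX : ∀ i, X i ^ 2 = X (i+1) * (2 * (n * s) * (1/2)^i) := by
    intro i
    simp only [X]
    rw [pow_succ 2 i, pow_mul s, one_div, inv_pow]
    field_simp
    ring
  obtain ⟨A, F, hA0, hAc, hFc, hQ⟩ := hierarchy d (fun i => ⌊X i⌋₊)
  have hAX : ∀ i, ((A i).card : ℝ) ≤ X i := by
    intro i
    cases i with
    | zero =>
      rw [hA0, Finset.card_univ, hn]
      simp only [X]; simp [hs0.ne']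
    | succ i =>
      exact (Nat.cast_le.2 (hAc i)).trans (Nat.floor_le (hX0 _).le)
  refine ⟨A, F, hA0, ?_, ?_, hQ⟩
  · have hlt : X (k+1) < 1 := by
      simp only [X]
      rw [div_lt_one (by positivity)]
      have h1 : (n:ℝ) * s ≤ s ^ (2^(k+1)) := by
        rw [← hsκ, ← pow_succ]
        exact pow_le_pow_right₀ hs1 hk
      have h2 : (2:ℝ) ≤ 2 ^ (k+1) := le_self_pow₀ (by norm_num) (by omega)
      have h3 : 0 < s ^ (2^(k+1)) := by positivity
      nlinarith
    have := (hAX (k+1)).trans_lt hlt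
    have h0 : (A (k+1)).card < 1 := by exact_mod_cast this
    exact Finset.card_eq_zero.1 (by omega)
  · have hF : ∀ i, ((F i).card : ℝ) ≤ 3 * (n * s) * (1/2)^i := by
      intro i
      have h := hFc i
      have hR : ((F i).card : ℝ) * ((⌊X (i+1)⌋₊ : ℝ) + 1) ≤
          ((A i).card : ℝ) ^ 2 + (A i).card * ((⌊X (i+1)⌋₊ : ℝ) + 1) := by exact_mod_cast h
      have hfl : X (i+1) ≤ (⌊X (i+1)⌋₊ : ℝ) + 1 := (Nat.lt_floor_add_one _).le
      set T : ℝ := (⌊X (i+1)⌋₊ : ℝ) + 1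
      have hT : 0 < T := (hX0 (i+1)).trans_le hfl
      have hA2 : ((A i).card : ℝ) ^ 2 ≤ T * (2 * (n * s) * (1/2)^i) :=
        calc ((A i).card : ℝ) ^ 2 ≤ X i ^ 2 := by gcongr; exact hAX i
          _ = _ := hXX i
          _ ≤ _ := by gcongr
      have hA3 : ((A i).card : ℝ) ≤ (n * s) * (1/2)^i :=
        calc _ ≤ X i := hAX i
          _ ≤ n * (1/2)^i := hXn i
          _ ≤ _ := by gcongr; nlinarith
      have : ((F i).card : ℝ) * T ≤ (3 * (n * s) * (1/2)^i) * T := by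
        calc _ ≤ _ := hR
          _ ≤ T * (2 * (n * s) * (1/2)^i) + ((n * s) * (1/2)^i) * T := by gcongr
          _ = _ := by ring
      exact le_of_mul_le_mul_right this hT
    rw [hns]
    calc ((((Finset.range (k+1)).biUnion F).card : ℕ) : ℝ)
        ≤ ((∑ i ∈ Finset.range (k+1), (F i).card : ℕ) : ℝ) := by
          exact_mod_cast Finset.card_biUnion_le
      _ = ∑ i ∈ Finset.range (k+1), ((F i).card : ℝ) := by push_cast; rfl
      _ ≤ ∑ i ∈ Finset.range (k+1), 3 * (n * s) * (1/2)^i := Finset.sum_le_sum fun i _ => hF i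
      _ = 3 * (n * s) * ∑ i ∈ Finset.range (k+1), (1/2 : ℝ)^i := by rw [Finset.mul_sum]
      _ ≤ 3 * (n * s) * 2 := by
          gcongr
          exact sum_geometric_two_le _
      _ = _ := by ring

end Sampling

section Final
variable {V : Type} [Fintype V]

/-- The weight function of the hopset with edge set `F`. -/
noncomputable def hopW (w : V → V → ℝ≥0∞) (F : Finset (V × V)) (u v : V) : ℝ≥0∞ :=
  if u ≠ v ∧ ((u, v) ∈ F ∨ (v, u) ∈ F) then gDist w u v else ⊤

lemma hopW_count (w : V → V → ℝ≥0∞) (F : Finset (V × V)) :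
    edgeCount (hopW w F) ≤ F.card := by
  unfold edgeCount
  have hsub : {p : Sym2 V | ∃ u v : V, p = s(u, v) ∧ u ≠ v ∧ hopW w F u v ≠ ⊤} ⊆
      ((F.image (fun p => s(p.1, p.2)) : Finset (Sym2 V)) : Set (Sym2 V)) := by
    rintro p ⟨u, v, rfl, huv, h⟩
    simp only [Finset.coe_image, Set.mem_image, Finset.mem_coe]
    unfold hopW at h
    split_ifs at h with h2
    · rcases h2.2 with h3 | h3
      · exact ⟨_, h3, rfl⟩
      · exact ⟨_, h3, Sym2.eq_swap⟩
    · exact absurd rfl h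
  exact (Set.ncard_le_ncard hsub (Finset.finite_toSet _)).trans
    (by rw [Set.ncard_coe_finset]; exact Finset.card_image_le)

lemma g_le_union (w : V → V → ℝ≥0∞) (F : Finset (V × V)) (t : ℕ) (u v : V) :
    gDist w u v ≤ hopDist (unionW w (hopW w F)) t u v := by
  induction t generalizing u with
  | zero =>
    by_cases h : u = v
    · subst h; simp [g_self]
    · simp [hopDist, h]
  | succ t ih =>
    conv_rhs => rw [hopDist]
    refine le_min (ih u) (le_iInf fun x => (g_tri w u x v).trans ?_)
    gcongr
    · unfold unionW hopW
      refine le_min (g_le_w w u x) ?_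
      split_ifs
      · exact le_rfl
      · exact le_top
    · exact ih x

lemma hop_F (w : V → V → ℝ≥0∞) (F : Finset (V × V)) (u v : V) (h : (u, v) ∈ F) :
    hopDist (unionW w (hopW w F)) 1 u v ≤ gDist w u v := by
  by_cases huv : u = v
  · subst huv; simp [hop_self]
  · refine (hop_one _ u v).trans ((min_le_right _ _).trans ?_)
    simp [hopW, huv, h]

lemma beta_bound (k M : ℕ) (ε L : ℝ) (hε : 0 < ε) (hε1 : ε ≤ 1) (hL : (k:ℝ) + 2 ≤ L)
    (hM : M = ⌈8 * ((k:ℝ) + 1) / ε⌉₊) :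
    (7 * M) ^ k ≤ ⌈(64 * L / ε) ^ L⌉₊ := by
  have hM1 : (M:ℝ) ≤ 9 * ((k:ℝ)+1) / ε := by
    have h1 : (M:ℝ) < 8 * ((k:ℝ) + 1) / ε + 1 := by
      rw [hM]; exact Nat.ceil_lt_add_one (by positivity)
    have h2 : 1 ≤ ((k:ℝ)+1) / ε := by
      rw [le_div_iff₀ hε]; have : (0:ℝ) ≤ k := by positivity
      linarith
    have h3 : 9 * ((k:ℝ)+1) / ε = 8 * ((k:ℝ) + 1) / ε + ((k:ℝ)+1) / ε := by ring
    linarith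
  have hk0 : (0:ℝ) ≤ k := by positivity
  have hb : (7 * M : ℝ) ≤ 64 * L / ε := by
    calc (7 * M : ℝ) ≤ 7 * (9 * ((k:ℝ)+1) / ε) := by gcongr
      _ = 63 * ((k:ℝ)+1) / ε := by ring
      _ ≤ 64 * L / ε := by
        apply div_le_div_of_nonneg_right _ hε.le
        linarith
  have hb1 : 1 ≤ 64 * L / ε := by
    rw [le_div_iff₀ hε]; linarith
  have : (((7 * M) ^ k : ℕ) : ℝ) ≤ (64 * L / ε) ^ L := by
    push_cast
    calc (7 * M : ℝ) ^ k ≤ (64 * L / ε) ^ k := by gcongr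
      _ = (64 * L / ε) ^ (k:ℝ) := (Real.rpow_natCast _ _).symm
      _ ≤ _ := Real.rpow_le_rpow_of_exponent_le hb1 (by linarith)
  exact_mod_cast this.trans (Nat.le_ceil _)

end Final

end HopsetProof

open HopsetProof

theorem hopset_with_constant_hopbound_bounded_aspect_ratio :
    ∃ C : ℝ, 0 < C ∧
      ∀ (V : Type) [Fintype V] (wG : V → V → ℝ≥0∞) (n κ : ℕ) (ρ ε Λ : ℝ),
        Fintype.card V = n → 2 ≤ n →
        (∀ u v, wG u v = wG v u) →
        (∀ u v, wG u v ≠ ⊤ → 1 ≤ wG u v) →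
        2 ≤ Λ →
        (∀ u v, gDist wG u v ≠ ⊤ → gDist wG u v ≤ ENNReal.ofReal Λ) →
        2 ≤ κ → (κ : ℝ) ≤ Real.logb 2 n / 4 →
        1 / (κ : ℝ) ≤ ρ → ρ < 1 / 2 →
        0 < ε → ε ≤ 1 →
        ∃ wH : V → V → ℝ≥0∞,
          (∀ u v, wH u v = wH v u) ∧
          (∀ u v, 0 < wH u v) ∧
          (edgeCount wH : ℝ) ≤ C * (n : ℝ) ^ (1 + 1 / (κ : ℝ)) * Real.logb 2 Λ ∧
          IsHopset wG wH
            ⌈(C * (Real.logb 2 κ + 1 / ρ) / ε) ^ (Real.logb 2 κ + 1 / ρ)⌉₊ ε := by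
  refine ⟨64, by norm_num, ?_⟩
  intro V _ wG n κ ρ ε Λ hn hn2 hs h1 hΛ _ hκ _ hρ1 hρ2 hε hε1
  set k := Nat.log 2 κ with hk
  have hkκ : κ + 1 ≤ 2 ^ (k+1) := Nat.lt_pow_succ_log_self (by norm_num) κ
  obtain ⟨A, F, hA0, hAk, hF, hQ⟩ :=
    hierarchy_size (gDist wG) n κ k hn (by omega) (by omega) hkκ
  set FF := (Finset.range (k+1)).biUnion F with hFF
  have hHs : ∀ u v, hopW wG FF u v = hopW wG FF v u := by
    intro u v
    unfold hopW
    rw [g_symm wG hs u v]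
    simp only [ne_comm, or_comm]
  refine ⟨hopW wG FF, hHs, ?_, ?_, ?_⟩
  · intro u v
    unfold hopW
    split_ifs with h
    · exact lt_of_lt_of_le zero_lt_one (g_pos wG h1 h.1)
    · exact ENNReal.zero_lt_top
  · have hlog : 1 ≤ Real.logb 2 Λ := by
      rw [Real.le_logb_iff_rpow_le (by norm_num) (by linarith)]
      simpa using hΛ
    have hp : 0 ≤ (n:ℝ) ^ (1 + 1 / (κ:ℝ)) := by positivity
    calc (edgeCount (hopW wG FF) : ℝ) ≤ (FF.card : ℝ) := by exact_mod_cast hopW_count wG FF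
      _ ≤ 6 * (n:ℝ) ^ (1 + 1 / (κ:ℝ)) := hF
      _ ≤ 64 * (n:ℝ) ^ (1 + 1 / (κ:ℝ)) * 1 := by linarith
      _ ≤ _ := by gcongr
  · intro u v
    refine ⟨g_le_union wG FF _ u v, ?_⟩
    set M := ⌈8 * ((k:ℝ) + 1) / ε⌉₊ with hM
    have hMr : 8 * ((k:ℝ) + 1) / ε ≤ M := Nat.le_ceil _
    have hMr2 : 8 * ((k:ℝ) + 1) ≤ ε * M := by
      rw [div_le_iff₀ hε] at hMr; linarith
    have hkM : 8 * (k + 1) ≤ M := by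
      have : (8 * ((k:ℝ) + 1)) ≤ M :=
        hMr2.trans (by have : (0:ℝ) ≤ M := by positivity
                       nlinarith)
      exact_mod_cast this
    have hM1 : 1 ≤ M := by omega
    have hS : ∀ u v, unionW wG (hopW wG FF) u v = unionW wG (hopW wG FF) v u := by
      intro u v; unfold unionW; rw [hs u v, hHs u v]
    have key := levels wG (unionW wG (hopW wG FF)) hs hS h1 (fun _ _ => min_le_left _ _)
      (g_le_union wG FF) M k hM1 (by omega) A hA0 ?_ k le_rfl u v
    · rw [hAk] at key
      have key2 := key.resolve_right (by simp)
      have hρ0 : 0 < ρ := lt_of_lt_of_le (by positivity) hρ1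
      have hL : (k:ℝ) + 2 ≤ Real.logb 2 κ + 1 / ρ := by
        have e1 : (k:ℝ) ≤ Real.logb 2 κ := by
          have := Real.natLog_le_logb κ 2
          exact_mod_cast this
        have e2 : 2 ≤ 1 / ρ := by
          rw [le_div_iff₀ hρ0]; linarith
        linarith
      refine (hop_mono _ (beta_bound k M ε _ hε hε1 hL hM) u v).trans (key2.trans ?_)
      gcongr
      have hM0 : (0:ℝ) < M := by exact_mod_cast hM1
      have e : (1 + (k:ℝ≥0∞) * (8 / M)) = ENNReal.ofReal (1 + k * (8 / M)) := by
        rw [ENNReal.ofReal_add (by norm_num) (by positivity), ENNReal.ofReal_mul (by positivity),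
          ENNReal.ofReal_div_of_pos hM0]
        simp
      rw [e]
      apply ENNReal.ofReal_le_ofReal
      have : (k:ℝ) * (8 / M) ≤ ε := by
        rw [mul_div_assoc', div_le_iff₀ hM0]; linarith
      linarith
    · intro i hi x hx y hy
      have hsub : ∀ p ∈ F i, p ∈ FF := fun p hp =>
        Finset.mem_biUnion.2 ⟨i, Finset.mem_range.2 (by omega), hp⟩
      rcases hQ i x hx y hy with h | ⟨z, hz, h2, h3⟩
      · exact Or.inl (hop_F wG FF x y (hsub _ h))
      · exact Or.inr ⟨z, hz, (hop_F wG FF x z (hsub _ h3)).trans h2⟩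
end

section
/- There is an absolute constant C>0 with the following property. Let G=(V,E,ω) be a finite weighted undirected graph on n≥2 vertices with positive edge weights. Let κ be an integer with 2≤κ≤(log₂ n)/4, let ρ be a real with 1/κ≤ρ<1/2, and let ε be a real with 0<ε≤1. Then there exists a (β,ε)-hopset H for G with at most C·n^{1+1/κ}·log₂ n edges, where β = ⌈(C·(log₂κ + 1/ρ)/ε)^{log₂κ + 1/ρ}⌉. -/
open scoped ENNReal Classical

namespace HopsetAux

variable {V : Type}

theorem hop_zero_self (w : V → V → ℝ≥0∞) (u : V) : hopDist w 0 u u = 0 := by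
  simp [hopDist]

theorem hop_succ_le (w : V → V → ℝ≥0∞) (t : ℕ) (u v : V) :
    hopDist w (t + 1) u v ≤ hopDist w t u v := by
  rw [hopDist]; exact min_le_left _ _

theorem hop_succ_le_step (w : V → V → ℝ≥0∞) (t : ℕ) (u x v : V) :
    hopDist w (t + 1) u v ≤ w u x + hopDist w t x v := by
  rw [hopDist]; exact (min_le_right _ _).trans (iInf_le _ x)

theorem hop_anti (w : V → V → ℝ≥0∞) {s t : ℕ} (h : s ≤ t) (u v : V) :
    hopDist w t u v ≤ hopDist w s u v := by
  induction h with
  | refl => exact le_rfl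
  | step _ ih => exact (hop_succ_le w _ u v).trans ih

theorem hop_self (w : V → V → ℝ≥0∞) (t : ℕ) (u : V) : hopDist w t u u = 0 :=
  le_antisymm ((hop_anti w (Nat.zero_le t) u u).trans (hop_zero_self w u).le) zero_le

theorem hop_one_le (w : V → V → ℝ≥0∞) (u v : V) : hopDist w 1 u v ≤ w u v := by
  have := hop_succ_le_step w 0 u v v
  simpa [hop_zero_self] using this

theorem hop_tri (w : V → V → ℝ≥0∞) (s t : ℕ) (u v x : V) :
    hopDist w (s + t) u x ≤ hopDist w s u v + hopDist w t v x := by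
  induction s generalizing u with
  | zero =>
    by_cases h : u = v
    · subst h; simp [hop_zero_self]
    · simp [hopDist, h]
  | succ s ih =>
    have e : s + 1 + t = (s + t) + 1 := by omega
    rw [e]
    conv_rhs => rw [hopDist]
    rw [min_add]
    refine le_min ((hop_succ_le w _ u x).trans (ih u)) ?_
    rw [ENNReal.iInf_add]
    refine le_iInf fun y => ?_
    refine (hop_succ_le_step w _ u y x).trans ?_
    rw [add_assoc]
    gcongr
    exact ih y

theorem hop_symm_le (w : V → V → ℝ≥0∞) (hw : ∀ u v, w u v = w v u) (t : ℕ) (u v : V) :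
    hopDist w t u v ≤ hopDist w t v u := by
  induction t generalizing u v with
  | zero => simp only [hopDist, eq_comm]; exact le_rfl
  | succ t ih =>
    conv_rhs => rw [hopDist]
    refine le_min ((hop_succ_le w _ u v).trans (ih u v)) ?_
    refine le_iInf fun y => ?_
    refine (hop_tri w t 1 u y v).trans ?_
    rw [add_comm, hw v y]
    exact add_le_add (hop_one_le w y v) (ih u y)

theorem hop_symm (w : V → V → ℝ≥0∞) (hw : ∀ u v, w u v = w v u) (t : ℕ) (u v : V) :
    hopDist w t u v = hopDist w t v u :=
  le_antisymm (hop_symm_le w hw t u v) (hop_symm_le w hw t v u)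

theorem g_le_hop (w : V → V → ℝ≥0∞) (t : ℕ) (u v : V) : gDist w u v ≤ hopDist w t u v :=
  iInf_le _ t

theorem g_le_w (w : V → V → ℝ≥0∞) (u v : V) : gDist w u v ≤ w u v :=
  (g_le_hop w 1 u v).trans (hop_one_le w u v)

theorem g_self (w : V → V → ℝ≥0∞) (u : V) : gDist w u u = 0 :=
  le_antisymm ((g_le_hop w 0 u u).trans (hop_zero_self w u).le) zero_le

theorem g_symm (w : V → V → ℝ≥0∞) (hw : ∀ u v, w u v = w v u) (u v : V) :
    gDist w u v = gDist w v u := by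
  unfold gDist; exact iInf_congr fun t => hop_symm w hw t u v

theorem g_tri (w : V → V → ℝ≥0∞) (u v x : V) :
    gDist w u x ≤ gDist w u v + gDist w v x := by
  conv_rhs => unfold gDist
  rw [ENNReal.iInf_add]
  refine le_iInf fun s => ?_
  rw [ENNReal.add_iInf]
  refine le_iInf fun t => ?_
  exact (g_le_hop w (s + t) u x).trans (hop_tri w s t u v x)

theorem g_le_hop_of_le (w W : V → V → ℝ≥0∞) (hW : ∀ u v, gDist w u v ≤ W u v) (t : ℕ) (u v : V) :
    gDist w u v ≤ hopDist W t u v := by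
  induction t generalizing u with
  | zero =>
    by_cases h : u = v
    · subst h; simp [g_self]
    · simp [hopDist, h]
  | succ t ih =>
    rw [hopDist]
    refine le_min (ih u) (le_iInf fun y => ?_)
    exact (g_tri w u y v).trans (add_le_add (hW u y) (ih y))

theorem g_pos [Finite V] (w : V → V → ℝ≥0∞) (hw : ∀ u v, 0 < w u v) (u v : V) (h : u ≠ v) :
    0 < gDist w u v := by
  obtain ⟨p, hp⟩ : ∃ p : V × V, ∀ q : V × V, w p.1 p.2 ≤ w q.1 q.2 := by
    have : Nonempty (V × V) := ⟨(u, v)⟩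
    exact Finite.exists_min (fun p : V × V => w p.1 p.2)
  refine lt_of_lt_of_le (hw p.1 p.2) (le_iInf fun t => ?_)
  induction t generalizing u with
  | zero => simp [hopDist, h]
  | succ t ih =>
    rw [hopDist]
    refine le_min (ih u h) (le_iInf fun y => ?_)
    exact (hp (u, y)).trans le_self_add

theorem greedy_aux [Finite V] (w : V → V → ℝ≥0∞) (s v : V) (Δ : ℝ≥0∞) (t : ℕ) (u : V)
    (hu : gDist w s u ≤ Δ) (hf : hopDist w t u v ≠ ⊤) :
    gDist w s v ≤ Δ ∨ ∃ y x, gDist w s y ≤ Δ ∧ Δ < gDist w s y + w y x ∧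
      gDist w s y + w y x + gDist w x v ≤ gDist w s u + hopDist w t u v := by
  induction t generalizing u with
  | zero =>
    by_cases h : u = v
    · subst h; exact Or.inl hu
    · simp [hopDist, h] at hf
  | succ t ih =>
    rw [hopDist] at hf ⊢
    rcases le_total (hopDist w t u v) (⨅ x : V, w u x + hopDist w t x v) with h | h
    · rw [min_eq_left h] at hf ⊢
      exact ih u hu hf
    · rw [min_eq_right h] at hf ⊢
      have : Nonempty V := ⟨u⟩
      obtain ⟨x, hx⟩ := exists_eq_ciInf_of_finite (f := fun x : V => w u x + hopDist w t x v)
      rw [← hx] at hf ⊢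
      by_cases hc : gDist w s u + w u x ≤ Δ
      · have h1 : gDist w s x ≤ gDist w s u + w u x :=
          (g_tri w s u x).trans (by gcongr; exact g_le_w w u x)
        rcases ih x (h1.trans hc) (fun e => hf (by simp [e])) with h2 | ⟨y, z, h2, h3, h4⟩
        · exact Or.inl h2
        · refine Or.inr ⟨y, z, h2, h3, h4.trans ?_⟩
          rw [← add_assoc]
          gcongr
      · refine Or.inr ⟨u, x, hu, not_le.mp hc, ?_⟩
        rw [← add_assoc]
        gcongr
        exact g_le_hop w t x v

theorem greedy [Finite V] (w : V → V → ℝ≥0∞) (s v : V) (Δ : ℝ≥0∞) (hf : gDist w s v ≠ ⊤) :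
    gDist w s v ≤ Δ ∨ ∃ y x, gDist w s y ≤ Δ ∧ Δ < gDist w s y + w y x ∧
      gDist w s y + w y x + gDist w x v ≤ gDist w s v := by
  by_cases hΔ : gDist w s v ≤ Δ
  · exact Or.inl hΔ
  refine Or.inr ?_
  have key : ∀ b, gDist w s v < b → ∃ y x, gDist w s y ≤ Δ ∧ Δ < gDist w s y + w y x ∧
      gDist w s y + w y x + gDist w x v < b := by
    intro b hb
    obtain ⟨t, ht⟩ := iInf_lt_iff.mp hb
    rcases greedy_aux w s v Δ t s (by simp [g_self]) (ne_top_of_lt ht) with h | ⟨y, x, h1, h2, h3⟩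
    · exact absurd h hΔ
    · refine ⟨y, x, h1, h2, lt_of_le_of_lt h3 ?_⟩
      simpa [g_self] using ht
  let S := {p : V × V // gDist w s p.1 ≤ Δ ∧ Δ < gDist w s p.1 + w p.1 p.2}
  obtain ⟨y, x, h1, h2, h3⟩ := key ⊤ (lt_top_iff_ne_top.mpr hf)
  have : Nonempty S := ⟨⟨(y, x), h1, h2⟩⟩
  obtain ⟨p, hp⟩ := Finite.exists_min
    (fun p : S => gDist w s p.1.1 + w p.1.1 p.1.2 + gDist w p.1.2 v)
  refine ⟨p.1.1, p.1.2, p.2.1, p.2.2, ?_⟩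
  by_contra hc
  obtain ⟨y', x', h1', h2', h3'⟩ := key _ (not_le.mp hc)
  exact absurd (hp ⟨(y', x'), h1', h2'⟩) (not_le.mpr h3')

/-- The level invariant. -/
def P (w W : V → V → ℝ≥0∞) (B : Finset V) (h : ℕ) (Δ e r : ℝ≥0∞) : Prop :=
  ∀ u v, gDist w u v ≤ Δ → hopDist W h u v ≤ gDist w u v + e ∨ ∃ z ∈ B, hopDist W h u z ≤ r

theorem P_mono (w W : V → V → ℝ≥0∞) (B : Finset V) {h h' : ℕ} {Δ e r e' r' : ℝ≥0∞}
    (hh : h ≤ h') (he : e ≤ e') (hr : r ≤ r') (hP : P w W B h Δ e r) : P w W B h' Δ e' r' := by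
  intro u v huv
  rcases hP u v huv with h1 | ⟨z, hz, h1⟩
  · exact Or.inl ((hop_anti W hh u v).trans (h1.trans (by gcongr)))
  · exact Or.inr ⟨z, hz, (hop_anti W hh u z).trans (h1.trans hr)⟩

theorem segments [Finite V] (w W : V → V → ℝ≥0∞)
    (hws : ∀ u v, w u v = w v u) (hWs : ∀ u v, W u v = W v u) (hwp : ∀ u v, 0 < w u v)
    (hWw : ∀ u v, W u v ≤ w u v)
    (B : Finset V) (h : ℕ) (Δ e r : ℝ≥0∞) (hΔ : Δ ≠ ⊤) (hP : P w W B h Δ e r) (m : ℕ) (u v : V)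
    (huv : gDist w u v ≤ m * Δ) :
    hopDist W (m * (h + 1)) u v ≤ gDist w u v + m * e ∨
    ∃ x y x' y' : V, ∃ p q : ℕ, ∃ X Y : ℝ≥0∞, x' ∈ B ∧ y' ∈ B ∧ p + q ≤ m ∧ gDist w u x ≤ X ∧
      X + gDist w x y + Y ≤ gDist w u v ∧
      hopDist W (p * (h + 1)) u x ≤ X + p * e ∧
      hopDist W h x x' ≤ r ∧ hopDist W h y y' ≤ r ∧
      hopDist W (q * (h + 1)) y v ≤ Y + q * e := by
  induction m generalizing u with
  | zero =>
    have : u = v := by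
      by_contra hne
      have := g_pos w hwp u v hne
      simp at huv
      exact this.ne' huv
    subst this
    left; rw [hop_self]; exact zero_le
  | succ m ih =>
    have hfin : gDist w u v ≠ ⊤ :=
      ne_top_of_le_ne_top (ENNReal.mul_ne_top (ENNReal.natCast_ne_top _) hΔ) huv
    rcases greedy w u v Δ hfin with h1 | ⟨y, x, h1, h2, h3⟩
    · have h1' : gDist w v u ≤ Δ := by rwa [g_symm w hws]
      rcases hP u v h1 with h2 | ⟨z, hz, h2⟩
      · left
        refine (hop_anti W (show h ≤ (m + 1) * (h + 1) by nlinarith) u v).trans (h2.trans ?_)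
        gcongr
        push_cast
        rw [add_mul, one_mul]
        exact le_add_self
      rcases hP v u h1' with h3 | ⟨z', hz', h3⟩
      · left
        rw [hop_symm W hWs, g_symm w hws]
        refine (hop_anti W (show h ≤ (m + 1) * (h + 1) by nlinarith) v u).trans (h3.trans ?_)
        gcongr
        push_cast
        rw [add_mul, one_mul]
        exact le_add_self
      · right
        exact ⟨u, v, z, z', 0, 0, 0, 0, hz, hz', by omega, by simp [g_self], by simp, by simp [hop_self], h2, h3,
          by simp [hop_self]⟩
    · have hxv : gDist w x v ≤ m * Δ := by
        by_contra hc
        have := ENNReal.add_lt_add h2 (not_le.mp hc)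
        have h4 := lt_of_lt_of_le this (h3.trans huv)
        push_cast at h4
        rw [add_mul, one_mul, add_comm] at h4
        exact lt_irrefl _ h4
      have hyx : hopDist W 1 y x ≤ w y x := (hop_one_le W y x).trans (hWw y x)
      have h1' : gDist w y u ≤ Δ := by rwa [g_symm w hws]
      have hux : gDist w u x ≤ gDist w u y + w y x :=
        (g_tri w u y x).trans (by gcongr; exact g_le_w w y x)
      have hyv : gDist w y v ≤ w y x + gDist w x v :=
        (g_tri w y x v).trans (by gcongr; exact g_le_w w y x)
      have first : hopDist W h u y ≤ gDist w u y + e ∨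
          ((∃ z ∈ B, hopDist W h u z ≤ r) ∧ (∃ z ∈ B, hopDist W h y z ≤ r)) := by
        rcases hP u y h1 with h4 | h4
        · exact Or.inl h4
        rcases hP y u h1' with h5 | h5
        · left; rwa [hop_symm W hWs, g_symm w hws]
        · exact Or.inr ⟨h4, h5⟩
      rcases first with hg | ⟨⟨z, hz, hzr⟩, ⟨z', hz', hzr'⟩⟩
      · have pre : ∀ (p : ℕ) (a : V) (X : ℝ≥0∞), hopDist W (p * (h + 1)) x a ≤ X + p * e →
            hopDist W ((p + 1) * (h + 1)) u a ≤
              gDist w u y + w y x + X + ((p + 1 : ℕ) : ℝ≥0∞) * e := by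
          intro p a X hpa
          have e1 : (p + 1) * (h + 1) = (h + 1) + p * (h + 1) := by ring
          rw [e1]
          refine (hop_tri W (h + 1) _ u x a).trans ?_
          refine (add_le_add (hop_tri W h 1 u y x) hpa).trans ?_
          refine (add_le_add (add_le_add hg hyx) le_rfl).trans (le_of_eq ?_)
          push_cast; ring
        rcases ih x hxv with h4 | ⟨a, b, a', b', p, q, X, Y, ha', hb', hpq, h9, h4, h5, h6, h7, h8⟩
        · left
          refine (pre m v _ h4).trans ?_
          gcongr
        · right
          refine ⟨a, b, a', b', p + 1, q, gDist w u y + w y x + X, Y, ha', hb', by omega,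
            (g_tri w u x a).trans (add_le_add hux h9), ?_,
            pre p a X h5, h6, h7, h8⟩
          refine le_trans (le_of_eq ?_) ((add_le_add le_rfl h4).trans h3)
          ring
      · rcases ih x hxv with h4 | ⟨a, b, a', b', p, q, X, Y, ha', hb', hpq, h9, h4, h5, h6, h7, h8⟩
        · right
          refine ⟨u, y, z, z', 0, m + 1, 0, w y x + gDist w x v, hz, hz', by omega, by simp [g_self], ?_,
            by simp [hop_self], hzr, hzr', ?_⟩
          · rw [zero_add, ← add_assoc]; exact h3
          · have e1 : (m + 1) * (h + 1) = h + (1 + m * (h + 1)) := by ring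
            rw [e1]
            refine (hop_anti W (Nat.le_add_left _ h) y v).trans ?_
            refine (hop_tri W 1 _ y x v).trans ((add_le_add hyx h4).trans ?_)
            rw [add_assoc]
            gcongr
            omega
        · right
          refine ⟨u, b, z, b', 0, q, 0, Y, hz, hb', by omega, by simp [g_self], ?_,
            by simp [hop_self], hzr, h7, h8⟩
          refine le_trans ?_ ((add_le_add le_rfl h4).trans h3)
          have : gDist w u b ≤ gDist w u y + w y x + (X + gDist w a b) :=
            (g_tri w u x b).trans (add_le_add hux ((g_tri w x a b).trans (add_le_add h9 le_rfl)))
          calc 0 + gDist w u b + Y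
              ≤ 0 + (gDist w u y + w y x + (X + gDist w a b)) + Y := by gcongr
            _ = gDist w u y + w y x + (X + gDist w a b + Y) := by ring

theorem P_step [Finite V] (w W : V → V → ℝ≥0∞)
    (hws : ∀ u v, w u v = w v u) (hWs : ∀ u v, W u v = W v u) (hwp : ∀ u v, 0 < w u v)
    (hWw : ∀ u v, W u v ≤ w u v) (hWg : ∀ u v, gDist w u v ≤ W u v)
    (B B' : Finset V)
    (hB : ∀ u ∈ B, ∀ v ∈ B, hopDist W 1 u v ≤ gDist w u v ∨
      ∃ z ∈ B', hopDist W 1 u z ≤ gDist w u v)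
    (h K : ℕ) (Δ e r : ℝ≥0∞) (hΔ : Δ ≠ ⊤) (hP : P w W B h Δ e r) :
    P w W B' ((K + 2) * (h + 1)) (K * Δ) (K * e + 4 * r) (K * Δ + K * e + 3 * r) := by
  intro u v huv
  rcases segments w W hws hWs hwp hWw B h Δ e r hΔ hP K u v huv with
    h1 | ⟨x, y, x', y', p, q, X, Y, hx', hy', hpq, h2, h3, h4, h5, h6, h7⟩
  · left
    refine (hop_anti W (by gcongr; omega) u v).trans (h1.trans ?_)
    rw [← add_assoc]
    exact le_self_add
  · have hd : gDist w x' y' ≤ r + gDist w x y + r := by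
      refine (g_tri w x' y y').trans ?_
      refine add_le_add ((g_tri w x' x y).trans (add_le_add ?_ le_rfl)) ?_
      · rw [g_symm w hws]; exact (g_le_hop_of_le w W hWg h x x').trans h5
      · exact (g_le_hop_of_le w W hWg h y y').trans h6
    have hpe : (p : ℝ≥0∞) * e + q * e ≤ K * e := by
      rw [← add_mul]; gcongr; exact_mod_cast hpq
    have hup : hopDist W (p * (h + 1) + h) u x' ≤ X + p * e + r :=
      (hop_tri W _ _ u x x').trans (add_le_add h4 h5)
    rcases hB x' hx' y' hy' with h8 | ⟨z, hz, h8⟩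
    · left
      have hh : p * (h + 1) + h + 1 + h + q * (h + 1) ≤ (K + 2) * (h + 1) := by nlinarith
      refine (hop_anti W hh u v).trans ?_
      have hyy : hopDist W h y' y ≤ r := by rwa [hop_symm W hWs]
      calc hopDist W (p * (h + 1) + h + 1 + h + q * (h + 1)) u v
          ≤ hopDist W (p * (h + 1) + h) u x' + hopDist W 1 x' y' + hopDist W h y' y
              + hopDist W (q * (h + 1)) y v :=
            (hop_tri W _ _ u y v).trans (add_le_add ((hop_tri W _ _ u y' y).trans
              (add_le_add (hop_tri W _ _ u x' y') le_rfl)) le_rfl)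
        _ ≤ (X + p * e + r) + (r + gDist w x y + r) + r + (Y + q * e) := by
            gcongr
            exact h8.trans hd
        _ = (X + gDist w x y + Y) + ((p * e + q * e) + 4 * r) := by ring
        _ ≤ _ := by gcongr
    · right
      refine ⟨z, hz, ?_⟩
      have hh : p * (h + 1) + h + 1 ≤ (K + 2) * (h + 1) := by nlinarith
      refine (hop_anti W hh u z).trans ?_
      calc hopDist W (p * (h + 1) + h + 1) u z
          ≤ hopDist W (p * (h + 1) + h) u x' + hopDist W 1 x' z := hop_tri W _ _ u x' z
        _ ≤ (X + p * e + r) + (r + gDist w x y + r) := by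
            gcongr
            exact h8.trans hd
        _ ≤ (X + p * e + r) + (r + gDist w x y + r) + (Y + q * e) := le_self_add
        _ = (X + gDist w x y + Y) + (p * e + q * e) + 3 * r := by ring
        _ ≤ _ := by gcongr; exact h3.trans huv

theorem P_all [Finite V] (w W : V → V → ℝ≥0∞)
    (hws : ∀ u v, w u v = w v u) (hWs : ∀ u v, W u v = W v u) (hwp : ∀ u v, 0 < w u v)
    (hWw : ∀ u v, W u v ≤ w u v) (hWg : ∀ u v, gDist w u v ≤ W u v)
    (A : ℕ → Finset V) (k : ℕ) (hA0 : ∀ v, v ∈ A 0)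
    (hA : ∀ i ≤ k, ∀ u ∈ A i, ∀ v ∈ A i, hopDist W 1 u v ≤ gDist w u v ∨
      ∃ z ∈ A (i + 1), hopDist W 1 u z ≤ gDist w u v)
    (K : ℕ) (hK : 8 * k + 8 ≤ K) (D : NNReal) (i : ℕ) (hi : i ≤ k) :
    P w W (A (i + 1)) (3 * (K + 3) ^ i - 2) (((K : NNReal) ^ i * D : NNReal) : ℝ≥0∞)
      (((8 * i / K : NNReal) * (K ^ i * D) : NNReal) : ℝ≥0∞)
      ((2 * (K ^ i * D) : NNReal) : ℝ≥0∞) := by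
  have hK0 : (K : NNReal) ≠ 0 := by
    have : K ≠ 0 := by omega
    exact_mod_cast this
  induction i with
  | zero =>
    intro u v huv
    rcases hA 0 (Nat.zero_le _) u (hA0 u) v (hA0 v) with h | ⟨z, hz, h⟩
    · left; simpa using h
    · right
      refine ⟨z, hz, ?_⟩
      simp only [pow_zero, one_mul, mul_one] at huv ⊢
      refine h.trans (huv.trans ?_)
      norm_cast
      rw [two_mul]
      exact le_self_add
  | succ i ih =>
    have := P_step w W hws hWs hwp hWw hWg (A (i + 1)) (A (i + 1 + 1)) (hA (i + 1) hi) _ K _ _ _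
      ENNReal.coe_ne_top (ih (by omega))
    have eΔ : ((K : ℝ≥0∞) * (((K : NNReal) ^ i * D : NNReal) : ℝ≥0∞)) =
        (((K : NNReal) ^ (i + 1) * D : NNReal) : ℝ≥0∞) := by
      push_cast; ring
    rw [eΔ] at this
    have cK : (K : ℝ≥0∞) = ((K : NNReal) : ℝ≥0∞) := by simp
    have c4 : (4 : ℝ≥0∞) = ((4 : NNReal) : ℝ≥0∞) := rfl
    have c3 : (3 : ℝ≥0∞) = ((3 : NNReal) : ℝ≥0∞) := rfl
    refine P_mono w W _ ?_ ?_ ?_ this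
    · have h1 : 1 ≤ (K + 3) ^ i := Nat.one_le_pow _ _ (by omega)
      have h2 : (K + 3) ^ (i + 1) = (K + 3) ^ i * (K + 3) := pow_succ _ _
      obtain ⟨a, ha⟩ : ∃ a, (K + 3) ^ i = a + 1 := ⟨(K + 3) ^ i - 1, by omega⟩
      rw [h2, ha]
      have h3 : 3 * (a + 1) - 2 + 1 = 3 * a + 2 := by omega
      rw [h3]
      apply Nat.le_sub_of_add_le
      nlinarith
    · rw [cK, c4, ← ENNReal.coe_mul, ← ENNReal.coe_mul, ← ENNReal.coe_add, ENNReal.coe_le_coe,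
        ← NNReal.coe_le_coe]
      have : (K : ℝ) ≠ 0 := by exact_mod_cast hK0
      push_cast
      apply le_of_eq
      field_simp
      ring
    · rw [cK, c3, ← ENNReal.coe_mul, ← ENNReal.coe_mul, ← ENNReal.coe_add, ← ENNReal.coe_add,
        ENNReal.coe_le_coe, ← NNReal.coe_le_coe]
      have h0 : (K : ℝ) ≠ 0 := by exact_mod_cast hK0
      have hKr : (8 * i + 6 : ℝ) ≤ K := by
        have : 8 * i + 6 ≤ K := by omega
        exact_mod_cast this
      push_cast
      have hD : (0 : ℝ) ≤ (K : ℝ) ^ i * D := by positivity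
      have : (K : ℝ) ^ (i + 1) * D + K * (8 * i / K * (K ^ i * D)) + 3 * (2 * (K ^ i * D)) =
          (K + (8 * i + 6)) * (K ^ i * D) := by
        field_simp
        ring
      have e2 : (2 : ℝ) * (K ^ (i + 1) * D) = (K + K) * (K ^ i * D) := by ring
      refine le_of_eq_of_le this ?_
      rw [e2]
      gcongr

theorem hop_final [Finite V] (w W : V → V → ℝ≥0∞)
    (hws : ∀ u v, w u v = w v u) (hWs : ∀ u v, W u v = W v u) (hwp : ∀ u v, 0 < w u v)
    (hWw : ∀ u v, W u v ≤ w u v) (hWg : ∀ u v, gDist w u v ≤ W u v)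
    (A : ℕ → Finset V) (k : ℕ) (hA0 : ∀ v, v ∈ A 0) (hAk : A (k + 1) = ∅)
    (hA : ∀ i ≤ k, ∀ u ∈ A i, ∀ v ∈ A i, hopDist W 1 u v ≤ gDist w u v ∨
      ∃ z ∈ A (i + 1), hopDist W 1 u z ≤ gDist w u v)
    (K : ℕ) (hK : 8 * k + 8 ≤ K) (ε : ℝ) (hε : 0 < ε) (hKε : 8 * k ≤ ε * K) (u v : V) :
    hopDist W (3 * (K + 3) ^ k) u v ≤ ENNReal.ofReal (1 + ε) * gDist w u v := by
  by_cases ht : gDist w u v = ⊤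
  · rw [ht, ENNReal.mul_top]
    · exact le_top
    · simp; linarith
  obtain ⟨T, hT⟩ : ∃ T : NNReal, gDist w u v = T := ⟨(gDist w u v).toNNReal, by simp [ht]⟩
  have hK0 : (K : NNReal) ≠ 0 := by
    have : K ≠ 0 := by omega
    exact_mod_cast this
  have e1 : (K : NNReal) ^ k * (T / K ^ k) = T := by field_simp
  have := P_all w W hws hWs hwp hWw hWg A k hA0 hA K hK (T / K ^ k) k le_rfl
  rw [hAk, e1] at this
  rcases this u v hT.le with h | ⟨z, hz, -⟩
  · refine (hop_anti W (Nat.sub_le _ _) u v).trans (h.trans ?_)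
    rw [hT, ENNReal.ofReal, ← ENNReal.coe_add, ← ENNReal.coe_mul, ENNReal.coe_le_coe,
      ← NNReal.coe_le_coe]
    push_cast
    rw [Real.coe_toNNReal _ (by linarith)]
    have hKp : (0 : ℝ) < K := by
      have : 0 < K := by omega
      exact_mod_cast this
    have : (8 * k / K : ℝ) ≤ ε := by rw [div_le_iff₀ hKp]; exact hKε
    have hTn : (0 : ℝ) ≤ T := T.2
    nlinarith [mul_le_mul_of_nonneg_right this hTn]
  · simp at hz

/-- Sampling step: an `m`-subset with small total bunch size exists. -/
theorem sample (d : V → V → ℝ≥0∞) (A : Finset V) (m : ℕ) (hm : m ≤ A.card) :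
    ∃ S : Finset V, S ⊆ A ∧ S.card = m ∧
      (m + 1) * ((A ×ˢ A).filter fun p => ∀ z ∈ S, d p.1 p.2 < d p.1 z).card
        ≤ A.card * A.card := by
  have hne : (A.powersetCard m).Nonempty := Finset.powersetCard_nonempty.mpr hm
  by_contra hcon
  push Not at hcon
  have hcount : ∀ u ∈ A, (((A.powersetCard m) ×ˢ A).filter
      fun p => ∀ z ∈ p.1, d u p.2 < d u z).card ≤ A.card.choose (m + 1) := by
    intro u hu
    rw [← Finset.card_powersetCard]
    refine Finset.card_le_card_of_injOn (fun p => insert p.2 p.1) ?_ ?_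
    · rintro ⟨S, v⟩ hp
      simp only [Finset.coe_filter, Finset.mem_product, Finset.mem_powersetCard,
        Set.mem_ofPred_eq] at hp
      obtain ⟨⟨⟨hS, hc⟩, hv⟩, hlt⟩ := hp
      have hvS : v ∉ S := fun h => lt_irrefl _ (hlt v h)
      simp only [Finset.mem_coe, Finset.mem_powersetCard]
      exact ⟨Finset.insert_subset hv hS, by rw [Finset.card_insert_of_notMem hvS, hc]⟩
    · rintro ⟨S, v⟩ hp ⟨S', v'⟩ hp' heq
      simp only [Finset.coe_filter, Finset.mem_product, Finset.mem_powersetCard,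
        Set.mem_ofPred_eq] at hp hp' heq
      obtain ⟨⟨⟨hS, hc⟩, hv⟩, hlt⟩ := hp
      obtain ⟨⟨⟨hS', hc'⟩, hv'⟩, hlt'⟩ := hp'
      have hvS : v ∉ S := fun h => lt_irrefl _ (hlt v h)
      have hvS' : v' ∉ S' := fun h => lt_irrefl _ (hlt' v' h)
      have hvv : v = v' := by
        by_contra hne
        have h1 : v ∈ S' := by
          have : v ∈ insert v' S' := heq ▸ Finset.mem_insert_self v S
          exact (Finset.mem_insert.mp this).resolve_left hne
        have h2 : v' ∈ S := by
          have : v' ∈ insert v S := heq ▸ Finset.mem_insert_self v' S'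
          exact (Finset.mem_insert.mp this).resolve_left (Ne.symm hne)
        exact lt_asymm (hlt v' h2) (hlt' v h1)
      subst hvv
      have : S = S' := by
        rw [← Finset.erase_insert hvS, heq, Finset.erase_insert hvS']
      rw [this]
  have hsum : ∑ S ∈ A.powersetCard m,
      ((A ×ˢ A).filter fun p => ∀ z ∈ S, d p.1 p.2 < d p.1 z).card
        ≤ A.card * A.card.choose (m + 1) := by
    calc _ = ∑ S ∈ A.powersetCard m, ∑ u ∈ A, ∑ v ∈ A,
          (if ∀ z ∈ S, d u v < d u z then 1 else 0) := by
          refine Finset.sum_congr rfl fun S _ => ?_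
          rw [Finset.card_filter, Finset.sum_product]
          exact Finset.sum_congr rfl fun _ _ => Finset.sum_congr rfl fun _ _ => by congr
      _ = ∑ u ∈ A, ∑ S ∈ A.powersetCard m, ∑ v ∈ A,
          (if ∀ z ∈ S, d u v < d u z then 1 else 0) := Finset.sum_comm
      _ ≤ ∑ u ∈ A, A.card.choose (m + 1) := by
          refine Finset.sum_le_sum fun u hu => ?_
          refine le_trans (le_of_eq ?_) (hcount u hu)
          rw [Finset.card_filter, Finset.sum_product]
      _ = _ := by simp
  have hlt : ∑ S ∈ A.powersetCard m, A.card * A.card <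
      ∑ S ∈ A.powersetCard m, (m + 1) *
        ((A ×ˢ A).filter fun p => ∀ z ∈ S, d p.1 p.2 < d p.1 z).card := by
    refine Finset.sum_lt_sum_of_nonempty hne fun S hS => ?_
    rw [Finset.mem_powersetCard] at hS
    exact hcon S hS.1 hS.2
  rw [Finset.sum_const, Finset.card_powersetCard, smul_eq_mul, ← Finset.mul_sum] at hlt
  have h2 : (m + 1) * (A.card * A.card.choose (m + 1)) ≤
      A.card.choose m * (A.card * A.card) := by
    have := Nat.choose_succ_right_eq A.card m
    calc (m + 1) * (A.card * A.card.choose (m + 1))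
        = A.card * (A.card.choose (m + 1) * (m + 1)) := by ring
      _ = A.card * (A.card.choose m * (A.card - m)) := by rw [this]
      _ ≤ A.card * (A.card.choose m * A.card) := by gcongr; omega
      _ = _ := by ring
  exact absurd (lt_of_lt_of_le hlt ((Nat.mul_le_mul_left _ hsum).trans h2)) (lt_irrefl _)


theorem build [Fintype V] (d : V → V → ℝ≥0∞) (a : ℕ → ℕ) (ha0 : a 0 = Fintype.card V)
    (ha : ∀ i, a (i + 1) ≤ a i) :
    ∃ A : ℕ → Finset V, A 0 = Finset.univ ∧ ∀ i, (A i).card = a i ∧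
      (a (i + 1) + 1) * ((A i ×ˢ A i).filter
        fun p => ∀ z ∈ A (i + 1), d p.1 p.2 < d p.1 z).card ≤ a i * a i := by
  have hs : ∀ (B : Finset V) (m : ℕ), ∃ S : Finset V, m ≤ B.card → S.card = m ∧
      (m + 1) * ((B ×ˢ B).filter fun p => ∀ z ∈ S, d p.1 p.2 < d p.1 z).card
        ≤ B.card * B.card := by
    intro B m
    by_cases hm : m ≤ B.card
    · obtain ⟨S, -, h1, h2⟩ := sample d B m hm
      exact ⟨S, fun _ => ⟨h1, by convert h2⟩⟩
    · exact ⟨∅, fun h => absurd h hm⟩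
  choose f hf using hs
  let A : ℕ → Finset V := fun i => Nat.rec Finset.univ (fun j B => f B (a (j + 1))) i
  have hA : ∀ i, A (i + 1) = f (A i) (a (i + 1)) := fun i => rfl
  have hc : ∀ i, (A i).card = a i := by
    intro i
    induction i with
    | zero => rw [ha0]; exact Finset.card_univ
    | succ i ih =>
      rw [hA]
      exact (hf (A i) (a (i + 1)) (by rw [ih]; exact ha i)).1
  refine ⟨A, rfl, fun i => ⟨hc i, ?_⟩⟩
  have := (hf (A i) (a (i + 1)) (by rw [hc]; exact ha i)).2
  rw [hc] at this
  rw [hA]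
  exact this

theorem hopset_exists [Fintype V] (w : V → V → ℝ≥0∞)
    (hws : ∀ u v, w u v = w v u) (hwp : ∀ u v, 0 < w u v)
    (k : ℕ) (a : ℕ → ℕ) (ha0 : a 0 = Fintype.card V) (ha : ∀ i, a (i + 1) ≤ a i)
    (hak : a (k + 1) = 0) (N : ℝ) (hN : ∀ i ≤ k, (a i : ℝ) * a i ≤ N * (a (i + 1) + 1))
    (K : ℕ) (hK : 8 * k + 8 ≤ K) (ε : ℝ) (hε : 0 < ε) (hKε : 8 * k ≤ ε * K)
    (β : ℕ) (hβ : 3 * (K + 3) ^ k ≤ β) :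
    ∃ wH : V → V → ℝ≥0∞, (∀ u v, wH u v = wH v u) ∧ (∀ u v, 0 < wH u v) ∧
      (edgeCount wH : ℝ) ≤ (k + 1) * (N + Fintype.card V) ∧ IsHopset w wH β ε := by
  obtain ⟨A, hA0, hA⟩ := build (gDist w) a ha0 ha
  have hpiv : ∀ (i : ℕ) (u : V), ∃ p : V, (A (i + 1)).Nonempty →
      p ∈ A (i + 1) ∧ ∀ z ∈ A (i + 1), gDist w u p ≤ gDist w u z := by
    intro i u
    by_cases hne : (A (i + 1)).Nonempty
    · obtain ⟨p, hp, h⟩ := Finset.exists_min_image (A (i + 1)) (fun z => gDist w u z) hne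
      exact ⟨p, fun _ => ⟨hp, h⟩⟩
    · exact ⟨u, fun h => absurd h hne⟩
  choose piv hpiv using hpiv
  let Bn : ℕ → Finset (V × V) := fun i => (A i ×ˢ A i).filter
        fun p => ∀ z ∈ A (i + 1), gDist w p.1 p.2 < gDist w p.1 z
  let E : Finset (V × V) := (Finset.range (k + 1)).biUnion fun i =>
    Bn i ∪ (A i).image (fun u => (u, piv i u))
  let wH : V → V → ℝ≥0∞ := fun u v =>
    if u ≠ v ∧ ((u, v) ∈ E ∨ (v, u) ∈ E) then gDist w u v else ⊤
  have hHs : ∀ u v, wH u v = wH v u := by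
    intro u v
    simp only [wH, g_symm w hws u v, ne_comm (a := u), or_comm (a := (u, v) ∈ E)]
  have hHg : ∀ u v, gDist w u v ≤ wH u v := by
    intro u v
    simp only [wH]
    split_ifs
    · exact le_rfl
    · exact le_top
  have hE : ∀ u v, (u, v) ∈ E → hopDist (unionW w wH) 1 u v ≤ gDist w u v := by
    intro u v huv
    by_cases hne : u = v
    · subst hne; simp [hop_self]
    · refine (hop_one_le _ u v).trans ((min_le_right _ _).trans ?_)
      simp [wH, hne, huv]
  refine ⟨wH, hHs, ?_, ?_, ?_⟩
  · intro u v
    simp only [wH]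
    split_ifs with h
    · exact g_pos w hwp u v h.1
    · exact ENNReal.zero_lt_top
  · have h1 : edgeCount wH ≤ E.card := by
      unfold edgeCount
      refine (Set.ncard_le_ncard (t := ((E.image fun p => s(p.1, p.2) : Finset (Sym2 V)) :
        Set (Sym2 V))) ?_ (Finset.finite_toSet _)).trans ?_
      · rintro p ⟨u, v, rfl, hne, hw⟩
        have : (u, v) ∈ E ∨ (v, u) ∈ E := by
          by_contra hc
          exact hw (by simp only [wH]; rw [if_neg]; exact fun h => hc h.2)
        rw [Finset.mem_coe, Finset.mem_image]
        rcases this with h | h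
        · exact ⟨_, h, rfl⟩
        · exact ⟨_, h, Sym2.eq_swap⟩
      · rw [Set.ncard_coe_finset]
        exact Finset.card_image_le
    have h2 : (E.card : ℝ) ≤ ∑ i ∈ Finset.range (k + 1), (N + Fintype.card V) := by
      have h3 : E.card ≤ ∑ i ∈ Finset.range (k + 1),
          (Bn i ∪ (A i).image (fun u => (u, piv i u))).card := Finset.card_biUnion_le
      refine (Nat.cast_le.mpr h3).trans ?_
      rw [Nat.cast_sum]
      refine Finset.sum_le_sum fun i hi => ?_
      have hi' : i ≤ k := by simpa [Nat.lt_succ_iff] using hi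
      have h4 : (Bn i ∪ (A i).image (fun u => (u, piv i u))).card ≤
          (Bn i).card + Fintype.card V :=
        (Finset.card_union_le _ _).trans
          (Nat.add_le_add_left (Finset.card_image_le.trans (Finset.card_le_univ _)) _)
      refine (Nat.cast_le.mpr h4).trans ?_
      push_cast
      gcongr
      have h5 : ((a (i + 1) : ℝ) + 1) * (Bn i).card ≤ a i * a i := by exact_mod_cast (hA i).2
      have h6 : (0 : ℝ) < (a (i + 1) : ℝ) + 1 := by positivity
      have h7 := h5.trans (hN i hi')
      rw [mul_comm] at h7
      exact le_of_mul_le_mul_right h7 h6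
    refine (Nat.cast_le.mpr h1).trans (h2.trans (le_of_eq ?_))
    simp
    ring
  · have hWg : ∀ u v, gDist w u v ≤ unionW w wH u v := fun u v =>
      le_min (g_le_w w u v) (hHg u v)
    intro u v
    refine ⟨g_le_hop_of_le w _ hWg β u v, (hop_anti _ hβ u v).trans ?_⟩
    refine hop_final w (unionW w wH) hws ?_ hwp (fun _ _ => min_le_left _ _) hWg A k ?_ ?_ ?_
      K hK ε hε hKε u v
    · intro u v; simp only [unionW, hws u v, hHs u v]
    · intro v; rw [hA0]; exact Finset.mem_univ v
    · rw [← Finset.card_eq_zero, (hA _).1, hak]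
    · intro i hi u hu v hv
      by_cases hc : ∀ z ∈ A (i + 1), gDist w u v < gDist w u z
      · left
        refine hE u v (Finset.mem_biUnion.mpr ⟨i, by simp; omega, Finset.mem_union_left _ ?_⟩)
        exact Finset.mem_filter.mpr ⟨Finset.mk_mem_product hu hv, hc⟩
      · right
        push Not at hc
        obtain ⟨z, hz, hzd⟩ := hc
        obtain ⟨hp, hm⟩ := hpiv i u ⟨z, hz⟩
        refine ⟨piv i u, hp, (hE _ _ ?_).trans ((hm z hz).trans hzd)⟩
        refine Finset.mem_biUnion.mpr ⟨i, by simp; omega, Finset.mem_union_right _ ?_⟩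
        exact Finset.mem_image_of_mem _ hu

end HopsetAux

theorem hopset_with_constant_hopbound :
    ∃ C : ℝ, 0 < C ∧
      ∀ (V : Type) [Fintype V] (wG : V → V → ℝ≥0∞) (n κ : ℕ) (ρ ε : ℝ),
        Fintype.card V = n → 2 ≤ n →
        (∀ u v, wG u v = wG v u) →
        (∀ u v, 0 < wG u v) →
        2 ≤ κ → (κ : ℝ) ≤ Real.logb 2 n / 4 →
        1 / (κ : ℝ) ≤ ρ → ρ < 1 / 2 →
        0 < ε → ε ≤ 1 →
        ∃ wH : V → V → ℝ≥0∞,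
          (∀ u v, wH u v = wH v u) ∧
          (∀ u v, 0 < wH u v) ∧
          (edgeCount wH : ℝ) ≤ C * (n : ℝ) ^ (1 + 1 / (κ : ℝ)) * Real.logb 2 n ∧
          IsHopset wG wH
            ⌈(C * (Real.logb 2 κ + 1 / ρ) / ε) ^ (Real.logb 2 κ + 1 / ρ)⌉₊ ε := by
  refine ⟨12, by norm_num, ?_⟩
  intro V _ wG n κ ρ ε hn hn2 hs hp hκ hκn hρ hρ2 hε hε1
  set k := Nat.log 2 κ with hk
  have hκ0 : (0 : ℝ) < κ := by exact_mod_cast (by omega : 0 < κ)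
  have hρ0 : 0 < ρ := lt_of_lt_of_le (by positivity) hρ
  have hn1 : (1 : ℝ) ≤ n := by exact_mod_cast (by omega : 1 ≤ n)
  have hn0 : (0 : ℝ) < n := by linarith
  have h2k : 2 ^ k ≤ κ := Nat.pow_log_le_self 2 (by omega)
  have hk2 : κ < 2 ^ (k + 1) := Nat.lt_pow_succ_log_self (by norm_num) κ
  have hkκ : k + 1 ≤ κ := (Nat.lt_two_pow_self (n := k)).trans_le h2k
  set x : ℝ := (n : ℝ) ^ (1 / (κ : ℝ)) with hx
  have hx1 : 1 ≤ x := Real.one_le_rpow hn1 (by positivity)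
  have hx0 : 0 < x := by linarith
  have hxκ : x ^ κ = n := by
    rw [hx, ← Real.rpow_natCast, ← Real.rpow_mul hn0.le, one_div_mul_cancel hκ0.ne', Real.rpow_one]
  let a : ℕ → ℕ := fun i => if i ≤ k then ⌊(n : ℝ) / x ^ (2 ^ i - 1)⌋₊ else 0
  have ha_le : ∀ i, (a i : ℝ) ≤ n / x ^ (2 ^ i - 1) := by
    intro i
    simp only [a]
    split_ifs
    · exact Nat.floor_le (by positivity)
    · simp; positivity
  have ha_ge : ∀ i ≤ k + 1, (n : ℝ) / x ^ (2 ^ i - 1) ≤ a i + 1 := by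
    intro i hi
    simp only [a]
    split_ifs with h
    · exact (Nat.lt_floor_add_one _).le
    · have : i = k + 1 := by omega
      subst this
      simp only [Nat.cast_zero, zero_add]
      rw [div_le_one (by positivity)]
      calc (n : ℝ) = x ^ κ := hxκ.symm
        _ ≤ _ := pow_le_pow_right₀ hx1 (by omega)
  have hpw : ∀ i : ℕ, 1 ≤ 2 ^ i := fun i => Nat.one_le_two_pow
  refine Exists.elim (HopsetAux.hopset_exists wG hs hp k a ?_ ?_ ?_ (n * x) ?_
    ⌈8 * ((k : ℝ) + 1) / ε⌉₊ ?_ ε hε ?_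
    ⌈(12 * (Real.logb 2 κ + 1 / ρ) / ε) ^ (Real.logb 2 κ + 1 / ρ)⌉₊ ?_) ?_
  · simp [a, hn]
  · intro i
    simp only [a]
    by_cases h : i + 1 ≤ k
    · rw [if_pos h, if_pos (by omega)]
      apply Nat.floor_mono
      have : 2 ^ i - 1 ≤ 2 ^ (i + 1) - 1 := by rw [pow_succ]; omega
      gcongr
    · rw [if_neg h]; exact Nat.zero_le _
  · simp [a]
  · intro i hi
    have h5 := ha_le i
    have h6 := ha_ge (i + 1) (by omega)
    have e2 : x ^ (2 ^ (i + 1) - 1) * x = x ^ (2 ^ i - 1) * x ^ (2 ^ i - 1) * (x * x) := by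
      rw [← pow_succ, ← pow_two x, ← pow_add, ← pow_add]
      congr 1
      have := hpw i
      rw [pow_succ]; omega
    calc (a i : ℝ) * a i ≤ (n / x ^ (2 ^ i - 1)) * (n / x ^ (2 ^ i - 1)) := by gcongr
      _ = n * x * (n / x ^ (2 ^ (i + 1) - 1)) := by
        have e3 : x ^ (2 ^ (i + 1) - 1) = x ^ (2 ^ i - 1) * x ^ (2 ^ i - 1) * x := by
          apply mul_right_cancel₀ hx0.ne'
          rw [e2]; ring
        rw [e3]
        field_simp
      _ ≤ _ := by gcongr
  · have : (8 * k + 8 : ℝ) ≤ ⌈8 * ((k : ℝ) + 1) / ε⌉₊ := by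
      refine le_trans ?_ (Nat.le_ceil _)
      rw [le_div_iff₀ hε]
      nlinarith [(Nat.cast_nonneg k : (0 : ℝ) ≤ k)]
    exact_mod_cast this
  · have h5 := Nat.le_ceil (8 * ((k : ℝ) + 1) / ε)
    rw [div_le_iff₀ hε] at h5
    linarith
  · have hL : (k : ℝ) + 2 ≤ Real.logb 2 κ + 1 / ρ := by
      have h5 : (k : ℝ) ≤ Real.logb 2 κ := by
        rw [Real.le_logb_iff_rpow_le (by norm_num) hκ0, Real.rpow_natCast]
        exact_mod_cast h2k
      have h6 : 2 ≤ 1 / ρ := by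
        rw [le_div_iff₀ hρ0]; linarith
      linarith
    set L := Real.logb 2 κ + 1 / ρ
    have hk0 : (0 : ℝ) ≤ k := Nat.cast_nonneg k
    have hb : (12 : ℝ) ≤ 12 * ((k : ℝ) + 1) / ε := by
      rw [le_div_iff₀ hε]; nlinarith
    have hKb : ((⌈8 * ((k : ℝ) + 1) / ε⌉₊ : ℝ) + 3) ≤ 12 * ((k : ℝ) + 1) / ε := by
      have h5 := (Nat.ceil_lt_add_one (show 0 ≤ 8 * ((k : ℝ) + 1) / ε by positivity)).le
      have h6 : 4 ≤ 4 * ((k : ℝ) + 1) / ε := by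
        rw [le_div_iff₀ hε]; nlinarith
      have h7 : 12 * ((k : ℝ) + 1) / ε = 8 * ((k : ℝ) + 1) / ε + 4 * ((k : ℝ) + 1) / ε := by ring
      linarith
    rw [← Nat.cast_le (α := ℝ)]
    refine le_trans ?_ (Nat.le_ceil _)
    push_cast
    calc 3 * ((⌈8 * ((k : ℝ) + 1) / ε⌉₊ : ℝ) + 3) ^ k
        ≤ (12 * ((k : ℝ) + 1) / ε) * (12 * ((k : ℝ) + 1) / ε) ^ k := by
          gcongr
          linarith
      _ = (12 * ((k : ℝ) + 1) / ε) ^ ((k + 1 : ℕ) : ℝ) := by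
          rw [Real.rpow_natCast, pow_succ]; ring
      _ ≤ (12 * ((k : ℝ) + 1) / ε) ^ L := by
          apply Real.rpow_le_rpow_of_exponent_le (by linarith)
          push_cast; linarith
      _ ≤ (12 * L / ε) ^ L := by
          apply Real.rpow_le_rpow (by positivity)
          · gcongr; linarith
          · linarith
  · rintro wH ⟨h1, h2, h3, h4⟩
    refine ⟨wH, h1, h2, h3.trans ?_, h4⟩
    have e1 : (n : ℝ) ^ (1 + 1 / (κ : ℝ)) = n * x := by
      rw [Real.rpow_add hn0, Real.rpow_one]
    rw [e1, hn]
    have hkl : (k : ℝ) + 1 ≤ Real.logb 2 n := by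
      have : ((k + 1 : ℕ) : ℝ) ≤ κ := by exact_mod_cast hkκ
      push_cast at this
      linarith
    have hnx : (n : ℝ) ≤ n * x := by nlinarith
    have hlog : 0 ≤ Real.logb 2 n := by linarith [(Nat.cast_nonneg k : (0 : ℝ) ≤ k)]
    calc ((k : ℝ) + 1) * (n * x + n) ≤ Real.logb 2 n * (n * x + n * x) := by gcongr
      _ ≤ 12 * (n * x) * Real.logb 2 n := by
        have : 0 ≤ Real.logb 2 n * (n * x) := by
          positivity
        nlinarith
end

section
/- There is an absolute constant C>0 with the following property. Let G=(V,E,ω) be a finite weighted undirected graph on n≥2 vertices with positive edge weights, let κ be an integer with 2≤κ≤(log₂ n)/4, let ρ be a real with 1/κ≤ρ<1/2, let ε be a real with 0<ε≤1, and let k≥0 be an integer. Then there exists a weighted edge set H_k on V with at most C·n^{1+1/κ} edges, each H_k-edge having weight at least the G-distance between its endpoints, such that for every pair u,v∈V with 2^k < d_G(u,v) ≤ 2^{k+1} one has d_{G∪H_k}^{(β)}(u,v) ≤ (1+ε)·d_G(u,v), where β = ⌈(C·(log₂κ + 1/ρ)/ε)^{log₂κ + 1/ρ}⌉. -/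
open scoped ENNReal Classical

section Basic
variable {V : Type} {w : V → V → ℝ≥0∞}

lemma hop_succ_le (t : ℕ) (u v : V) : hopDist w (t+1) u v ≤ hopDist w t u v := by
  simp only [hopDist]; exact min_le_left _ _

lemma hop_mono {s t : ℕ} (h : s ≤ t) (u v : V) : hopDist w t u v ≤ hopDist w s u v := by
  induction h with
  | refl => exact le_rfl
  | step _ ih => exact (hop_succ_le _ u v).trans ih

lemma hop_step (t : ℕ) (u x v : V) : hopDist w (t+1) u v ≤ w u x + hopDist w t x v := by
  simp only [hopDist]; exact (min_le_right _ _).trans (iInf_le _ x)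

lemma hop_zero (u : V) : hopDist w 0 u u = 0 := by simp [hopDist]

lemma hop_one (u v : V) : hopDist w 1 u v ≤ w u v := by
  have := hop_step (w := w) 0 u v v
  rwa [hop_zero, add_zero] at this

lemma hop_concat (s t : ℕ) (u x v : V) :
    hopDist w (s + t) u v ≤ hopDist w s u x + hopDist w t x v := by
  induction s generalizing u with
  | zero =>
    by_cases h : u = x
    · subst h; simp [hop_zero]
    · simp [hopDist, h]
  | succ s ih =>
    have e : hopDist w (s+1) u x = min (hopDist w s u x) (⨅ y, w u y + hopDist w s y x) := rfl
    rw [e, ← min_add_add_right, ENNReal.iInf_add, Nat.add_right_comm]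
    refine le_min ((hop_succ_le _ _ _).trans (ih u)) (le_iInf fun y => ?_)
    refine (hop_step _ u y v).trans ?_
    rw [add_assoc]
    gcongr
    exact ih y

lemma hop_symm_le (hs : ∀ u v, w u v = w v u) (t : ℕ) (u v : V) :
    hopDist w t u v ≤ hopDist w t v u := by
  induction t generalizing u v with
  | zero => simp [hopDist, eq_comm]
  | succ t ih =>
    have e : hopDist w (t+1) v u = min (hopDist w t v u) (⨅ y, w v y + hopDist w t y u) := rfl
    rw [e]
    refine le_min ((hop_succ_le _ _ _).trans (ih u v)) (le_iInf fun y => ?_)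
    refine (hop_concat t 1 u y v).trans ?_
    rw [add_comm, hs v y]
    exact add_le_add (hop_one y v) (ih u y)

lemma hop_symm (hs : ∀ u v, w u v = w v u) (t : ℕ) (u v : V) :
    hopDist w t u v = hopDist w t v u :=
  le_antisymm (hop_symm_le hs t u v) (hop_symm_le hs t v u)

lemma gDist_le_hop (t : ℕ) (u v : V) : gDist w u v ≤ hopDist w t u v := iInf_le _ t

lemma gDist_self (u : V) : gDist w u u = 0 :=
  le_antisymm ((gDist_le_hop 0 u u).trans (hop_zero u).le) bot_le

lemma gDist_le (u v : V) : gDist w u v ≤ w u v := (gDist_le_hop 1 u v).trans (hop_one u v)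

lemma gDist_symm (hs : ∀ u v, w u v = w v u) (u v : V) : gDist w u v = gDist w v u := by
  unfold gDist; exact iInf_congr fun t => hop_symm hs t u v

lemma gDist_tri (u x v : V) : gDist w u v ≤ gDist w u x + gDist w x v := by
  conv_rhs => unfold gDist
  rw [ENNReal.iInf_add]
  refine le_iInf fun s => ?_
  rw [ENNReal.add_iInf]
  exact le_iInf fun t => (gDist_le_hop (s+t) u v).trans (hop_concat s t u x v)

lemma gDist_next [Fintype V] {x v : V} (h : x ≠ v) :
    ∃ y, w x y + gDist w y v = gDist w x v := by
  have key : (⨅ y, w x y + gDist w y v) ≤ gDist w x v := by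
    refine le_iInf fun t => ?_
    induction t with
    | zero => simp [hopDist, h]
    | succ t ih =>
      refine le_min ih (iInf_mono fun y => ?_)
      gcongr
      exact gDist_le_hop t y v
  have : Nonempty V := ⟨x⟩
  obtain ⟨y, hy⟩ := exists_eq_ciInf_of_finite (f := fun y => w x y + gDist w y v)
  refine ⟨y, le_antisymm (hy.le.trans key) ((gDist_tri x y v).trans ?_)⟩
  gcongr
  exact gDist_le x y

lemma gDist_le_hop_of {W : V → V → ℝ≥0∞} (h : ∀ u v, gDist w u v ≤ W u v) (t : ℕ) (u v : V) :
    gDist w u v ≤ hopDist W t u v := by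
  induction t generalizing u with
  | zero =>
    by_cases h : u = v
    · subst h; simp [gDist_self]
    · simp [hopDist, h]
  | succ t ih =>
    refine le_min (ih u) (le_iInf fun y => (gDist_tri u y v).trans (add_le_add (h u y) (ih y)))

lemma split_path [Fintype V] (hpos : ∀ u v, 0 < w u v) {u v : V} {r : ℝ≥0∞}
    (hfin : gDist w u v ≠ ⊤) (hr : r < gDist w u v) :
    ∃ x y, gDist w u x ≤ r ∧ r < gDist w u x + w x y ∧
      gDist w u x + w x y + gDist w y v = gDist w u v := by
  let S : Finset V := Finset.univ.filter fun x =>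
    gDist w u x + gDist w x v = gDist w u v ∧ gDist w u x ≤ r
  have hu : u ∈ S := by simp [S, gDist_self]
  obtain ⟨x, hxS, hmax⟩ := S.exists_max_image (gDist w u) ⟨u, hu⟩
  obtain ⟨hx1, hx2⟩ : gDist w u x + gDist w x v = gDist w u v ∧ gDist w u x ≤ r := by
    simpa [S] using hxS
  have hxv : x ≠ v := by
    rintro rfl; exact absurd hx2 (not_le.2 hr)
  obtain ⟨y, hy⟩ := gDist_next (w := w) hxv
  have htot : gDist w u x + w x y + gDist w y v = gDist w u v := by rw [add_assoc, hy, hx1]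
  refine ⟨x, y, hx2, ?_, htot⟩
  by_contra hcon
  push Not at hcon
  have huy : gDist w u y ≤ gDist w u x + w x y :=
    (gDist_tri u x y).trans (by gcongr; exact gDist_le x y)
  have hyS : y ∈ S := by
    simp only [S, Finset.mem_filter, Finset.mem_univ, true_and]
    refine ⟨le_antisymm ?_ (gDist_tri u y v), huy.trans hcon⟩
    rw [← htot]; gcongr
  have h1 := hmax y hyS
  have hux : gDist w u x ≠ ⊤ := fun h => hfin (by rw [← hx1, h, top_add])
  have hyv : gDist w y v ≠ ⊤ := fun h => hfin (by rw [← htot, h, add_top])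
  have h2 : gDist w u v < gDist w u v := calc
    gDist w u v ≤ gDist w u y + gDist w y v := gDist_tri u y v
    _ ≤ gDist w u x + gDist w y v := by gcongr
    _ < gDist w u x + w x y + gDist w y v :=
      ENNReal.add_lt_add_right hyv (ENNReal.lt_add_right hux (hpos x y).ne')
    _ = _ := htot
  exact lt_irrefl _ h2

end Basic

section Level
variable {V : Type} [Fintype V] {w : V → V → ℝ≥0∞}

lemma ruling (hs : ∀ u v, w u v = w v u) (A : Finset V) (δ : ℝ≥0∞) (t : ℝ) :
    ∃ S ⊆ A, (S.card : ℝ) * t ≤ A.card ∧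
      ∀ u ∈ A, t ≤ (A.filter fun v => gDist w u v ≤ δ).card → ∃ s ∈ S, gDist w u s ≤ 2 * δ := by
  let Pop : Finset V := A.filter fun u => t ≤ ((A.filter fun v => gDist w u v ≤ δ).card : ℝ)
  let F : Finset (Finset V) := Pop.powerset.filter fun S =>
    ∀ a ∈ S, ∀ b ∈ S, a ≠ b → 2 * δ < gDist w a b
  have hF : (∅ : Finset V) ∈ F := by simp [F]
  obtain ⟨S, hSF, hmax⟩ := F.exists_max_image Finset.card ⟨_, hF⟩
  obtain ⟨hSP, hsep⟩ : S ⊆ Pop ∧ ∀ a ∈ S, ∀ b ∈ S, a ≠ b → 2 * δ < gDist w a b := by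
    simpa [F] using hSF
  have hPA : Pop ⊆ A := Finset.filter_subset _ _
  refine ⟨S, hSP.trans hPA, ?_, ?_⟩
  · have hd : ∀ a ∈ S, ∀ b ∈ S, a ≠ b → Disjoint (A.filter fun v => gDist w a v ≤ δ)
        (A.filter fun v => gDist w b v ≤ δ) := by
      intro a ha b hb hab
      rw [Finset.disjoint_left]
      intro c hc1 hc2
      simp only [Finset.mem_filter] at hc1 hc2
      have := hsep a ha b hb hab
      refine absurd ((gDist_tri a c b).trans ?_) (not_le.2 this)
      rw [two_mul, gDist_symm hs c b]
      exact add_le_add hc1.2 hc2.2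
    have hc := Finset.card_biUnion hd
    have hsub : (S.biUnion fun a => A.filter fun v => gDist w a v ≤ δ) ⊆ A :=
      Finset.biUnion_subset.2 fun a _ => Finset.filter_subset _ _
    have hle := Finset.card_le_card hsub
    rw [hc] at hle
    calc (S.card : ℝ) * t = ∑ a ∈ S, t := by simp
      _ ≤ ∑ a ∈ S, ((A.filter fun v => gDist w a v ≤ δ).card : ℝ) :=
        Finset.sum_le_sum fun a ha => (Finset.mem_filter.1 (hSP ha)).2
      _ ≤ A.card := by exact_mod_cast hle
  · intro u hu hpop
    by_contra hcon
    push Not at hcon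
    have huS : u ∉ S := fun h => by
      have := hcon u h
      simp [gDist_self] at this
    have hins : insert u S ∈ F := by
      simp only [F, Finset.mem_filter, Finset.mem_powerset]
      refine ⟨Finset.insert_subset (Finset.mem_filter.2 ⟨hu, hpop⟩) hSP, ?_⟩
      intro a ha b hb hab
      rcases Finset.mem_insert.1 ha with rfl | ha' <;> rcases Finset.mem_insert.1 hb with rfl | hb'
      · exact absurd rfl hab
      · exact hcon b hb'
      · rw [gDist_symm hs]; exact hcon a ha'
      · exact hsep a ha' b hb' hab
    have := hmax _ hins
    rw [Finset.card_insert_of_notMem huS] at this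
    omega

lemma level (hs : ∀ u v, w u v = w v u) (A : Finset V) (δ : ℝ≥0∞) (t : ℝ) (ht : 1 ≤ t) :
    ∃ (S : Finset V) (E : Finset (V × V)), (S.card : ℝ) * t ≤ A.card ∧ (E.card : ℝ) ≤ A.card * t ∧
      ∀ u ∈ A, (∃ s ∈ S, (u, s) ∈ E ∧ gDist w u s ≤ 2 * δ) ∨
        (∀ v ∈ A, gDist w u v ≤ δ → (u, v) ∈ E) := by
  obtain ⟨S, -, hcard, hS⟩ := ruling hs A δ t
  have hF : ∀ u : V, ∃ F : Finset V, (F.card : ℝ) ≤ t ∧ (u ∈ A →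
      ((∃ s ∈ S, s ∈ F ∧ gDist w u s ≤ 2 * δ) ∨ (∀ v ∈ A, gDist w u v ≤ δ → v ∈ F))) := by
    intro u
    by_cases hu : u ∈ A
    · by_cases hp : t ≤ (A.filter fun v => gDist w u v ≤ δ).card
      · obtain ⟨s, hsS, hd⟩ := hS u hu hp
        exact ⟨{s}, by simpa using ht, fun _ => Or.inl ⟨s, hsS, by simp, hd⟩⟩
      · refine ⟨A.filter fun v => gDist w u v ≤ δ, (not_le.1 hp).le, fun _ => Or.inr ?_⟩
        intro v hv hd
        exact Finset.mem_filter.2 ⟨hv, hd⟩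
    · exact ⟨∅, by simp; linarith, fun h => absurd h hu⟩
  choose F hF1 hF2 using hF
  refine ⟨S, A.biUnion fun u => (F u).image fun v => (u, v), hcard, ?_, ?_⟩
  · have h1 := Finset.card_biUnion_le (s := A) (t := fun u => (F u).image fun v => (u, v))
    calc (((A.biUnion fun u => (F u).image fun v => (u, v)).card : ℕ) : ℝ)
        ≤ ∑ u ∈ A, (((F u).image fun v => (u, v)).card : ℝ) := by exact_mod_cast h1
      _ ≤ ∑ u ∈ A, t := Finset.sum_le_sum fun u _ =>
          (by exact_mod_cast Finset.card_image_le : (((F u).image fun v => (u, v)).card : ℝ)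
            ≤ (F u).card).trans (hF1 u)
      _ = A.card * t := by simp
  · have hmem : ∀ u ∈ A, ∀ v ∈ F u, (u, v) ∈ A.biUnion fun u => (F u).image fun v => (u, v) := by
      intro u hu v hv
      exact Finset.mem_biUnion.2 ⟨u, hu, Finset.mem_image.2 ⟨v, hv, rfl⟩⟩
    intro u hu
    rcases hF2 u hu with ⟨s, h1, h2, h3⟩ | h
    · exact Or.inl ⟨s, h1, hmem u hu s h2, h3⟩
    · exact Or.inr fun v hv hd => hmem u hu v (h v hv hd)

end Level
section Chain
variable {V : Type} {w W : V → V → ℝ≥0∞}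

noncomputable def dR (w : V → V → ℝ≥0∞) (u v : V) : ℝ := (gDist w u v).toReal

def HB (W : V → V → ℝ≥0∞) (t : ℕ) (u v : V) (a : ℝ) : Prop := hopDist W t u v ≤ ENNReal.ofReal a

lemma dR_nonneg (u v : V) : 0 ≤ dR w u v := ENNReal.toReal_nonneg

lemma dR_spec {u v : V} (h : gDist w u v ≠ ⊤) : gDist w u v = ENNReal.ofReal (dR w u v) :=
  (ENNReal.ofReal_toReal h).symm

lemma dR_symm (hs : ∀ u v, w u v = w v u) (u v : V) : dR w u v = dR w v u := by
  unfold dR; rw [gDist_symm hs]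

lemma fin_symm (hs : ∀ u v, w u v = w v u) {u v : V} (h : gDist w u v ≠ ⊤) :
    gDist w v u ≠ ⊤ := by rwa [gDist_symm hs]

lemma fin_trans {u x v : V} (h1 : gDist w u x ≠ ⊤) (h2 : gDist w x v ≠ ⊤) : gDist w u v ≠ ⊤ :=
  ne_top_of_le_ne_top (ENNReal.add_ne_top.2 ⟨h1, h2⟩) (gDist_tri u x v)

lemma dR_tri {u x v : V} (h1 : gDist w u x ≠ ⊤) (h2 : gDist w x v ≠ ⊤) :
    dR w u v ≤ dR w u x + dR w x v := by
  unfold dR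
  rw [← ENNReal.toReal_add h1 h2]
  exact ENNReal.toReal_mono (ENNReal.add_ne_top.2 ⟨h1, h2⟩) (gDist_tri u x v)

lemma dR_self (u : V) : dR w u u = 0 := by simp [dR, gDist_self]

lemma HB.mono {s t : ℕ} {u v : V} {a b : ℝ} (h : HB W s u v a) (hst : s ≤ t) (hab : a ≤ b) :
    HB W t u v b :=
  ((hop_mono hst u v).trans h).trans (ENNReal.ofReal_le_ofReal hab)

lemma HB.trans {s t : ℕ} {u x v : V} {a b : ℝ} (h1 : HB W s u x a) (h2 : HB W t x v b)
    (ha : 0 ≤ a) (hb : 0 ≤ b) : HB W (s + t) u v (a + b) := by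
  unfold HB at *
  rw [ENNReal.ofReal_add ha hb]
  exact (hop_concat s t u x v).trans (add_le_add h1 h2)

lemma HB.symm (hs : ∀ u v, W u v = W v u) {t : ℕ} {u v : V} {a : ℝ} (h : HB W t u v a) :
    HB W t v u a := by
  unfold HB at *; rwa [hop_symm hs]

lemma HB.fin (hW : ∀ u v, gDist w u v ≤ W u v) {t : ℕ} {u v : V} {a : ℝ} (h : HB W t u v a) :
    gDist w u v ≠ ⊤ :=
  ne_top_of_le_ne_top ENNReal.ofReal_ne_top ((gDist_le_hop_of hW t u v).trans h)

lemma HB.dR_le (hW : ∀ u v, gDist w u v ≤ W u v) {t : ℕ} {u v : V} {a : ℝ} (h : HB W t u v a)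
    (ha : 0 ≤ a) : dR w u v ≤ a :=
  ENNReal.toReal_le_of_le_ofReal ha ((gDist_le_hop_of hW t u v).trans h)

lemma HB.zero (u : V) : HB W 0 u u 0 := by simp [HB, hop_zero]

lemma HB.edge {u v : V} {a : ℝ} (h : W u v ≤ ENNReal.ofReal a) : HB W 1 u v a :=
  (hop_one u v).trans h

lemma split_real [Fintype V] (hpos : ∀ u v, 0 < w u v) {u v : V} {r : ℝ}
    (hfin : gDist w u v ≠ ⊤) (hr0 : 0 ≤ r) (hr : r < dR w u v) :
    ∃ x y, ∃ c : ℝ, gDist w u x ≠ ⊤ ∧ gDist w u y ≠ ⊤ ∧ gDist w y v ≠ ⊤ ∧ 0 ≤ c ∧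
      w x y ≤ ENNReal.ofReal c ∧ dR w u x ≤ r ∧ r < dR w u x + c ∧ dR w u y ≤ dR w u x + c ∧
      dR w u x + c + dR w y v = dR w u v := by
  have hr' : ENNReal.ofReal r < gDist w u v := by
    rw [dR_spec hfin]; exact (ENNReal.ofReal_lt_ofReal_iff_of_nonneg hr0).2 hr
  obtain ⟨x, y, h1, h2, h3⟩ := split_path hpos hfin hr'
  have hsum : gDist w u x + w x y + gDist w y v ≠ ⊤ := by rwa [h3]
  obtain ⟨h12, hyv⟩ := ENNReal.add_ne_top.1 hsum
  obtain ⟨hux, hxy⟩ := ENNReal.add_ne_top.1 h12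
  have huy : gDist w u y ≤ gDist w u x + w x y :=
    (gDist_tri u x y).trans (by gcongr; exact gDist_le x y)
  refine ⟨x, y, (w x y).toReal, hux, ne_top_of_le_ne_top h12 huy, hyv, ENNReal.toReal_nonneg,
    (ENNReal.ofReal_toReal hxy).ge, ENNReal.toReal_le_of_le_ofReal hr0 h1, ?_, ?_, ?_⟩
  · unfold dR; rw [← ENNReal.toReal_add hux hxy]
    exact (ENNReal.ofReal_lt_iff_lt_toReal hr0 h12).1 h2
  · unfold dR; rw [← ENNReal.toReal_add hux hxy]
    exact ENNReal.toReal_mono h12 huy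
  · unfold dR; rw [← ENNReal.toReal_add hux hxy, ← ENNReal.toReal_add h12 hyv, h3]

/-- The level-`i` property. -/
def LP (w W : V → V → ℝ≥0∞) (A : Finset V) (h : ℕ) (r e R : ℝ) : Prop :=
  ∀ u v, gDist w u v ≠ ⊤ → dR w u v ≤ r →
    HB W h u v (dR w u v + e) ∨ ∃ z ∈ A, HB W h u z R

lemma chain [Fintype V] (hpos : ∀ u v, 0 < w u v) (hWw : ∀ u v, W u v ≤ w u v)
    {A : Finset V} {h : ℕ} {r e R : ℝ} (hr : 0 < r) (he : 0 ≤ e)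
    (P : LP w W A h r e R) (c : ℕ) : ∀ u v, gDist w u v ≠ ⊤ → dR w u v ≤ c * r →
      (∃ j : ℕ, j * r ≤ dR w u v ∧ HB W ((j + 1) * (h + 1)) u v (dR w u v + (j + 1) * e)) ∨
      (∃ x, ∃ j : ℕ, gDist w u x ≠ ⊤ ∧ gDist w x v ≠ ⊤ ∧ dR w u x + dR w x v = dR w u v ∧
        j * r ≤ dR w u x ∧ HB W (j * (h + 1)) u x (dR w u x + j * e) ∧
        ∃ z ∈ A, HB W h x z R) := by
  have hfail : ∀ u v, gDist w u v ≠ ⊤ → (∃ z ∈ A, HB W h u z R) →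
      (∃ x, ∃ j : ℕ, gDist w u x ≠ ⊤ ∧ gDist w x v ≠ ⊤ ∧ dR w u x + dR w x v = dR w u v ∧
        j * r ≤ dR w u x ∧ HB W (j * (h + 1)) u x (dR w u x + j * e) ∧
        ∃ z ∈ A, HB W h x z R) := by
    intro u v hf hz
    refine ⟨u, 0, by simp [gDist_self], hf, by simp [dR_self], by simp [dR_self], ?_, hz⟩
    simpa [dR_self] using HB.zero u
  have hsmall : ∀ u v, gDist w u v ≠ ⊤ → dR w u v ≤ r →
      (∃ j : ℕ, j * r ≤ dR w u v ∧ HB W ((j + 1) * (h + 1)) u v (dR w u v + (j + 1) * e)) ∨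
      (∃ x, ∃ j : ℕ, gDist w u x ≠ ⊤ ∧ gDist w x v ≠ ⊤ ∧ dR w u x + dR w x v = dR w u v ∧
        j * r ≤ dR w u x ∧ HB W (j * (h + 1)) u x (dR w u x + j * e) ∧
        ∃ z ∈ A, HB W h x z R) := by
    intro u v hf hd
    rcases P u v hf hd with hg | hz
    · exact Or.inl ⟨0, by simpa using dR_nonneg u v, hg.mono (by simp) (by simp)⟩
    · exact Or.inr (hfail u v hf hz)
  induction c with
  | zero =>
    intro u v hf hd
    simp only [Nat.cast_zero, zero_mul] at hd
    exact hsmall u v hf (hd.trans hr.le)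
  | succ c ih =>
    intro u v hf hd
    by_cases hle : dR w u v ≤ r
    · exact hsmall u v hf hle
    push Not at hle
    obtain ⟨x, y, a, hux, huy, hyv, ha, hxy, h1, h2, h3, h4⟩ := split_real hpos hf hr.le hle
    rcases P u x hux h1 with hg | hz
    swap
    · exact Or.inr (hfail u v hf hz)
    have hedge : HB W 1 x y a := HB.edge ((hWw x y).trans hxy)
    have n1 := dR_nonneg (w := w) u x
    have huyHB : HB W (h + 1) u y (dR w u x + e + a) := hg.trans hedge (by linarith) ha
    push_cast at hd
    rcases ih y v hyv (by linarith) with ⟨j, hj, hHB⟩ | ⟨x', j, f1, f2, f3, f4, f5, f6⟩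
    · left
      refine ⟨j + 1, by push_cast; linarith, ?_⟩
      have n2 := dR_nonneg (w := w) y v
      refine (huyHB.trans hHB (by linarith) (by positivity)).mono (le_of_eq (by ring)) ?_
      push_cast; linarith
    · right
      have fu : gDist w u x' ≠ ⊤ := fin_trans huy f1
      have t1 := dR_tri huy f1
      have t2 := dR_tri fu f2
      have n2 := dR_nonneg (w := w) y x'
      refine ⟨x', j + 1, fu, f2, by linarith, by push_cast; linarith, ?_, f6⟩
      refine (huyHB.trans f5 (by linarith) (by positivity)).mono (le_of_eq (by ring)) ?_
      push_cast; linarith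

lemma step [Fintype V] (hs : ∀ u v, w u v = w v u) (hpos : ∀ u v, 0 < w u v)
    (hWs : ∀ u v, W u v = W v u)
    (hWw : ∀ u v, W u v ≤ w u v) (hW : ∀ u v, gDist w u v ≤ W u v)
    {A S : Finset V} {h m : ℕ} {r e R δ : ℝ} (hr : 0 < r) (he : 0 ≤ e) (hR : 0 ≤ R)
    (hδ : m * r + 2 * R ≤ δ)
    (P : LP w W A h r e R)
    (hE : ∀ u ∈ A, (∃ s ∈ S, W u s ≤ ENNReal.ofReal (2 * δ)) ∨
      (∀ v ∈ A, gDist w u v ≤ ENNReal.ofReal δ → W u v ≤ gDist w u v)) :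
    LP w W S ((m + 2) * (h + 1)) (m * r) ((m + 1) * e + 4 * R) (m * r + m * e + R + 2 * δ) := by
  intro u v hf hd
  have bnd : ∀ j : ℕ, j * r ≤ dR w u v → j ≤ m := by
    intro j hj
    have : (j : ℝ) * r ≤ m * r := hj.trans hd
    exact_mod_cast le_of_mul_le_mul_right this hr
  have hδ0 : 0 ≤ δ := le_trans (by positivity) hδ
  rcases chain hpos hWw hr he P m u v hf hd with ⟨j, hj, hHB⟩ | ⟨x, j, fx, fxv, hsum, hj, hHB, z, hz, hxz⟩
  · left
    have hjm := bnd j hj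
    refine hHB.mono (Nat.mul_le_mul_right _ (by omega)) ?_
    have : (j : ℝ) * e ≤ m * e := by gcongr
    linarith
  have n1 := dR_nonneg (w := w) u x
  have n2 := dR_nonneg (w := w) x v
  have hjm := bnd j (by linarith)
  have hje : (j : ℝ) * e ≤ m * e := by gcongr
  have huz := hHB.trans hxz (by positivity) hR
  rcases hE z hz with ⟨s, hsS, hzs⟩ | hall
  · right
    refine ⟨s, hsS, (huz.trans (HB.edge hzs) (by positivity) (by positivity)).mono ?_ ?_⟩
    · have := Nat.mul_le_mul_right (h + 1) hjm
      nlinarith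
    · linarith
  left
  have hvx : dR w v x ≤ m * r := by rw [dR_symm hs]; linarith
  rcases chain hpos hWw hr he P m v x (fin_symm hs fxv) hvx with
    ⟨i, hi, hHB'⟩ | ⟨y, i, fy, fyx, hsum', hi, hHB', z', hz', hyz'⟩
  · rw [dR_symm hs] at hi hHB'
    have hij := bnd (j + i) (by push_cast; linarith)
    have hije : ((j + i : ℕ) : ℝ) * e ≤ m * e := by gcongr
    push_cast at hije
    refine (hHB.trans (hHB'.symm hWs) (by positivity) (by positivity)).mono ?_ ?_
    · rw [← add_mul]; exact Nat.mul_le_mul_right _ (by omega)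
    · linarith
  · have n3 := dR_nonneg (w := w) v y
    have n4 := dR_nonneg (w := w) y x
    rw [dR_symm hs v x] at hsum'
    have hij := bnd (j + i) (by push_cast; linarith)
    have hije : ((j + i : ℕ) : ℝ) * e ≤ m * e := by gcongr
    push_cast at hije
    have fxz := hxz.fin hW
    have fyz := hyz'.fin hW
    have dxz := hxz.dR_le hW hR
    have dyz := hyz'.dR_le hW hR
    have fxz' : gDist w x z' ≠ ⊤ := fin_trans (fin_symm hs fyx) fyz
    have fzz' : gDist w z z' ≠ ⊤ := fin_trans (fin_symm hs fxz) fxz'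
    have t1 := dR_tri (fin_symm hs fyx) fyz
    have t2 := dR_tri (fin_symm hs fxz) fxz'
    rw [dR_symm hs z x] at t2
    rw [dR_symm hs x y] at t1
    have hzz : HB W 1 z z' (dR w y x + 2 * R) := by
      refine HB.edge ((hall z' hz' ?_).trans ?_)
      · rw [dR_spec fzz']; exact ENNReal.ofReal_le_ofReal (by linarith)
      · rw [dR_spec fzz']; exact ENNReal.ofReal_le_ofReal (by linarith)
    have hz'v := (hyz'.symm hWs).trans (hHB'.symm hWs) hR (by positivity)
    refine ((huz.trans hzz (by positivity) (by positivity)).trans hz'v (by positivity)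
      (by positivity)).mono ?_ ?_
    · have := Nat.mul_le_mul_right (h + 1) hij
      nlinarith
    · linarith

end Chain
section Final
variable {V : Type} [Fintype V] {w W : V → V → ℝ≥0∞}

lemma build (hs : ∀ u v, w u v = w v u) (δ : ℕ → ℝ≥0∞) (t : ℕ → ℝ) (ht : ∀ i, 1 ≤ t i) :
    ∃ (A : ℕ → Finset V) (E : ℕ → Finset (V × V)), A 0 = Finset.univ ∧
      ∀ i, ((A (i+1)).card : ℝ) * t i ≤ (A i).card ∧ ((E i).card : ℝ) ≤ (A i).card * t i ∧
      ∀ u ∈ A i, (∃ s ∈ A (i+1), (u, s) ∈ E i ∧ gDist w u s ≤ 2 * δ i) ∨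
        (∀ v ∈ A i, gDist w u v ≤ δ i → (u, v) ∈ E i) := by
  have := fun (i : ℕ) (A : Finset V) => level hs A (δ i) (t i) (ht i)
  choose S E h using this
  let A : ℕ → Finset V := fun i => Nat.rec Finset.univ (fun i A => S i A) i
  exact ⟨A, fun i => E i (A i), rfl, fun i => h i (A i)⟩

lemma LP.mono {A : Finset V} {h h' : ℕ} {r e e' R R' : ℝ} (P : LP w W A h r e R)
    (hh : h ≤ h') (he : e ≤ e') (hR : R ≤ R') : LP w W A h' r e' R' := by
  intro u v hf hd
  rcases P u v hf hd with hg | ⟨z, hz, hg⟩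
  · exact Or.inl (hg.mono hh (by linarith))
  · exact Or.inr ⟨z, hz, hg.mono hh hR⟩

lemma levels (hs : ∀ u v, w u v = w v u) (hpos : ∀ u v, 0 < w u v)
    (hWs : ∀ u v, W u v = W v u)
    (hWw : ∀ u v, W u v ≤ w u v) (hW : ∀ u v, gDist w u v ≤ W u v)
    {A : ℕ → Finset V} {m l : ℕ} {r : ℝ} (hr : 0 < r) (hm : 40 ≤ m) (hl : 34 * l ≤ m)
    (hA : A 0 = Finset.univ)
    (hE : ∀ i < l, ∀ u ∈ A i,
      (∃ s ∈ A (i+1), W u s ≤ ENNReal.ofReal (2 * ((m + 8) * (r * m ^ i)))) ∨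
      (∀ v ∈ A i, gDist w u v ≤ ENNReal.ofReal ((m + 8) * (r * m ^ i)) → W u v ≤ gDist w u v))
    (i : ℕ) (hi : i ≤ l) :
    ∃ h, h + 1 ≤ (m + 4) ^ i ∧ LP w W (A i) h (r * m ^ i) (17 * i / m * (r * m ^ i))
      (4 * (r * m ^ i)) := by
  induction i with
  | zero =>
    refine ⟨0, by simp, fun u v _ _ => Or.inr ⟨u, by simp [hA], ?_⟩⟩
    exact (HB.zero u).mono le_rfl (by positivity)
  | succ i ih =>
    obtain ⟨h, hh, P⟩ := ih (by omega)
    have hm0 : (0 : ℝ) < m := by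
      have : 0 < m := by omega
      exact_mod_cast this
    have hq : 0 < r * (m : ℝ) ^ i := by positivity
    have hm' : (40 : ℝ) ≤ m := by exact_mod_cast hm
    have hil : 34 * (i : ℝ) ≤ m := by
      have : 34 * i ≤ m := by omega
      exact_mod_cast this
    set q := r * (m : ℝ) ^ i with hqdef
    have hstep := step hs hpos hWs hWw hW (m := m) (δ := (m + 8) * q) hq (by positivity)
      (by positivity) (by linarith) P (hE i (by omega))
    have hqq : r * (m : ℝ) ^ (i + 1) = m * q := by rw [hqdef]; ring
    rw [hqq]
    have hme : (m : ℝ) * (17 * i / m * q) = 17 * i * q := by field_simp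
    refine ⟨(m + 2) * (h + 1), ?_, hstep.mono le_rfl ?_ ?_⟩
    · have h1 : 1 ≤ (m + 4) ^ i := by omega
      calc (m + 2) * (h + 1) + 1 ≤ (m + 2) * (m + 4) ^ i + (m + 4) ^ i := by gcongr
        _ ≤ (m + 4) ^ (i + 1) := by rw [pow_succ]; nlinarith
    · have h2 : 17 * (i : ℝ) / m * q ≤ q := by
        have : 17 * (i : ℝ) / m ≤ 1 := by rw [div_le_one hm0]; linarith
        nlinarith
      have h3 : 17 * ((i + 1 : ℕ) : ℝ) / m * (m * q) = 17 * i * q + 17 * q := by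
        push_cast; field_simp
      rw [h3, add_mul, hme]; linarith
    · rw [hme]; nlinarith

lemma count {n x : ℝ} (hn : 0 ≤ n) (hx : 2 ≤ x) {a : ℕ → ℝ} (h0 : a 0 ≤ n)
    (h : ∀ i, a (i + 1) * (2 * (x / 2) ^ 2 ^ i) ≤ a i) (i : ℕ) :
    a i * (2 * (x / 2) ^ 2 ^ i) ≤ n * x * (1 / 2) ^ i := by
  have hy : 0 < x / 2 := by linarith
  induction i with
  | zero => simp; nlinarith
  | succ i ih =>
    have h1 := h i
    have hp : 0 < (x / 2) ^ 2 ^ i := by positivity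
    have e : (x / 2) ^ 2 ^ (i + 1) = (x / 2) ^ 2 ^ i * (x / 2) ^ 2 ^ i := by
      rw [← pow_add]; congr 1; ring
    rw [e, pow_succ]
    have h2 : a (i + 1) * (2 * (x / 2) ^ 2 ^ i) * (x / 2) ^ 2 ^ i ≤ a i * (x / 2) ^ 2 ^ i := by
      gcongr
    nlinarith

lemma empty_bound {x : ℝ} (hx : 16 ≤ x) {κ l : ℕ} (hκ : 2 ≤ κ) (hl : 2 * κ ≤ 2 ^ l) :
    x ^ κ * x * (1 / 2) ^ l < 2 * (x / 2) ^ 2 ^ l := by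
  have hx0 : 0 < x := by linarith
  have h1 : (x / 2) ^ (2 * κ) ≤ (x / 2) ^ 2 ^ l := pow_le_pow_right₀ (by linarith) hl
  have h2 : (x / 2) ^ (2 * κ) = x ^ κ * (x / 4) ^ κ := by
    rw [pow_mul, ← mul_pow]; congr 1; ring
  have h3 : (x / 4) ^ 2 ≤ (x / 4) ^ κ := pow_le_pow_right₀ (by linarith) hκ
  have h4 : x ≤ (x / 4) ^ 2 := by nlinarith
  have h5 : ((1 : ℝ) / 2) ^ l ≤ 1 := pow_le_one₀ (by norm_num) (by norm_num)
  have hp : 0 < x ^ κ := by positivity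
  calc x ^ κ * x * (1 / 2) ^ l ≤ x ^ κ * x * 1 := by gcongr
    _ ≤ x ^ κ * (x / 4) ^ κ := by rw [mul_one]; gcongr; linarith
    _ = (x / 2) ^ (2 * κ) := h2.symm
    _ ≤ (x / 2) ^ 2 ^ l := h1
    _ < 2 * (x / 2) ^ 2 ^ l := by
      have : 0 < (x / 2) ^ 2 ^ l := by positivity
      linarith

lemma edge_count (E : Finset (V × V)) (wH : V → V → ℝ≥0∞)
    (h : ∀ u v, wH u v ≠ ⊤ → (u, v) ∈ E ∨ (v, u) ∈ E) : edgeCount wH ≤ E.card := by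
  unfold edgeCount
  have hsub : {p : Sym2 V | ∃ u v : V, p = s(u, v) ∧ u ≠ v ∧ wH u v ≠ ⊤} ⊆
      ((E.image fun q : V × V => s(q.1, q.2) : Finset (Sym2 V)) : Set (Sym2 V)) := by
    rintro p ⟨u, v, rfl, -, hw⟩
    rw [Finset.mem_coe, Finset.mem_image]
    rcases h u v hw with h | h
    · exact ⟨_, h, rfl⟩
    · exact ⟨_, h, Sym2.eq_swap⟩
  refine (Set.ncard_le_ncard hsub (Finset.finite_toSet _)).trans ?_
  rw [Set.ncard_coe_finset]
  exact Finset.card_image_le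

end Final

theorem single_scale_hopset :
    ∃ C : ℝ, 0 < C ∧
      ∀ (V : Type) [Fintype V] (wG : V → V → ℝ≥0∞) (n κ k : ℕ) (ρ ε : ℝ),
        Fintype.card V = n → 2 ≤ n →
        (∀ u v, wG u v = wG v u) →
        (∀ u v, 0 < wG u v) →
        2 ≤ κ → (κ : ℝ) ≤ Real.logb 2 n / 4 →
        1 / (κ : ℝ) ≤ ρ → ρ < 1 / 2 →
        0 < ε → ε ≤ 1 →
        ∃ wH : V → V → ℝ≥0∞,
          (∀ u v, wH u v = wH v u) ∧
          (∀ u v, gDist wG u v ≤ wH u v) ∧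
          (edgeCount wH : ℝ) ≤ C * (n : ℝ) ^ (1 + 1 / (κ : ℝ)) ∧
          ∀ u v : V, (2 : ℝ≥0∞) ^ k < gDist wG u v → gDist wG u v ≤ (2 : ℝ≥0∞) ^ (k + 1) →
            hopDist (unionW wG wH)
                ⌈(C * (Real.logb 2 κ + 1 / ρ) / ε) ^ (Real.logb 2 κ + 1 / ρ)⌉₊ u v ≤
              ENNReal.ofReal (1 + ε) * gDist wG u v := by

  refine ⟨39, by norm_num, ?_⟩
  intro V _ wG n κ k ρ ε hcard hn hs hpos hκ hκn hρ1 hρ2 hε0 hε1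
  -- parameters
  obtain ⟨l, hldef⟩ : ∃ l : ℕ, l = Nat.log 2 κ + 2 := ⟨_, rfl⟩
  have hl2κ : 2 * κ ≤ 2 ^ l := by
    have := Nat.lt_pow_succ_log_self (b := 2) (by norm_num) κ
    rw [hldef, show Nat.log 2 κ + 2 = (Nat.log 2 κ).succ + 1 from rfl, pow_succ]
    omega
  have hl2 : 2 ≤ l := by omega
  have hlR : (2 : ℝ) ≤ l := by exact_mod_cast hl2
  have hκR : (2 : ℝ) ≤ κ := by exact_mod_cast hκ
  have hnR : (2 : ℝ) ≤ n := by exact_mod_cast hn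
  have hρ0 : 0 < ρ := lt_of_lt_of_le (by positivity) hρ1
  have hlL : (l : ℝ) ≤ Real.logb 2 κ + 1 / ρ := by
    have h1 : (2 : ℝ) ≤ 1 / ρ := by
      rw [le_div_iff₀ hρ0]; linarith
    have h2 : ((Nat.log 2 κ : ℕ) : ℝ) ≤ Real.logb 2 κ := by
      rw [Real.le_logb_iff_rpow_le (by norm_num) (by linarith), Real.rpow_natCast]
      exact_mod_cast Nat.pow_log_le_self 2 (by omega)
    rw [hldef]; push_cast; linarith
  obtain ⟨x, hxdef⟩ : ∃ x : ℝ, x = (n : ℝ) ^ (1 / (κ : ℝ)) := ⟨_, rfl⟩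
  have hxκ : x ^ κ = n := by
    rw [hxdef, ← Real.rpow_natCast, ← Real.rpow_mul (by linarith), one_div,
      inv_mul_cancel₀ (by linarith), Real.rpow_one]
  have hx0 : 0 ≤ x := by rw [hxdef]; positivity
  have hx16 : 16 ≤ x := by
    by_contra hcon
    push Not at hcon
    have h1 : x ^ κ < 16 ^ κ := pow_lt_pow_left₀ hcon hx0 (by omega)
    have h2 : (2 : ℝ) ^ (4 * (κ : ℝ)) ≤ n := by
      rw [← Real.le_logb_iff_rpow_le (by norm_num) (by linarith)]; linarith
    have h3 : (2 : ℝ) ^ (4 * (κ : ℝ)) = 16 ^ κ := by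
      rw [Real.rpow_mul (by norm_num), Real.rpow_natCast]; norm_num
    rw [hxκ] at h1; linarith
  have hnx : (n : ℝ) ^ (1 + 1 / (κ : ℝ)) = n * x := by
    rw [Real.rpow_add (by linarith), Real.rpow_one, hxdef]
  obtain ⟨m, hmdef⟩ : ∃ m : ℕ, m = ⌈34 * (l : ℝ) / ε⌉₊ := ⟨_, rfl⟩
  have hm1 : 34 * (l : ℝ) / ε ≤ m := by rw [hmdef]; exact Nat.le_ceil _
  have hm2 : (m : ℝ) < 34 * (l : ℝ) / ε + 1 := by
    rw [hmdef]; exact Nat.ceil_lt_add_one (by positivity)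
  have hlm : 34 * (l : ℝ) ≤ m := le_trans (by
    rw [le_div_iff₀ hε0]; nlinarith) hm1
  have hlm' : 34 * l ≤ m := by exact_mod_cast hlm
  have hm40 : 40 ≤ m := by omega
  have hm0 : (0 : ℝ) < m := by linarith
  obtain ⟨r, hrdef⟩ : ∃ r : ℝ, r = 2 ^ (k + 1) / (m : ℝ) ^ l := ⟨_, rfl⟩
  have hr : 0 < r := by rw [hrdef]; positivity
  have hrm : r * (m : ℝ) ^ l = 2 ^ (k + 1) := by rw [hrdef]; field_simp
  -- construction
  obtain ⟨A, E, hA0, hAE⟩ := build hs (fun i => ENNReal.ofReal ((m + 8) * (r * m ^ i)))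
    (fun i => 2 * (x / 2) ^ 2 ^ i) (fun i => by
      have : 1 ≤ (x / 2) ^ 2 ^ i := one_le_pow₀ (by linarith)
      linarith)
  have hcnt := count (n := n) (x := x) (by linarith) (by linarith)
    (a := fun i => ((A i).card : ℝ)) (by simp [hA0, hcard]) (fun i => (hAE i).1)
  let EE : Finset (V × V) := (Finset.range l).biUnion E
  let wH : V → V → ℝ≥0∞ := fun u v => if (u, v) ∈ EE ∨ (v, u) ∈ EE then gDist wG u v else ⊤
  have hHs : ∀ u v, wH u v = wH v u := by
    intro u v
    simp only [wH, gDist_symm hs u v, or_comm]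
  have hHge : ∀ u v, gDist wG u v ≤ wH u v := by
    intro u v
    simp only [wH]; split_ifs
    · exact le_rfl
    · exact le_top
  have hHle : ∀ i < l, ∀ u v, (u, v) ∈ E i → wH u v ≤ gDist wG u v := by
    intro i hi u v huv
    have : (u, v) ∈ EE := Finset.mem_biUnion.2 ⟨i, Finset.mem_range.2 hi, huv⟩
    simp [wH, this]
  refine ⟨wH, hHs, hHge, ?_, ?_⟩
  · have h1 : edgeCount wH ≤ EE.card := edge_count EE wH (by
      intro u v h
      by_contra hcon
      exact h (by simp only [wH, if_neg hcon]))
    have h2 : EE.card ≤ ∑ i ∈ Finset.range l, (E i).card := Finset.card_biUnion_le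
    rw [hnx]
    calc (edgeCount wH : ℝ) ≤ ∑ i ∈ Finset.range l, ((E i).card : ℝ) := by
          exact_mod_cast h1.trans h2
      _ ≤ ∑ i ∈ Finset.range l, n * x * (1 / 2) ^ i :=
          Finset.sum_le_sum fun i _ => (hAE i).2.1.trans (hcnt i)
      _ = n * x * ∑ i ∈ Finset.range l, (1 / 2 : ℝ) ^ i := by rw [Finset.mul_sum]
      _ ≤ n * x * 2 := by gcongr; exact sum_geometric_two_le l
      _ ≤ 39 * (n * x) := by
          have : 0 ≤ (n : ℝ) * x := by positivity
          linarith
  · intro u v hlo hhi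
    have hWs : ∀ u v, unionW wG wH u v = unionW wG wH v u := by
      intro u v; simp only [unionW, hs u v, hHs u v]
    have hWw : ∀ u v, unionW wG wH u v ≤ wG u v := fun u v => min_le_left _ _
    have hWH : ∀ u v, unionW wG wH u v ≤ wH u v := fun u v => min_le_right _ _
    have hW : ∀ u v, gDist wG u v ≤ unionW wG wH u v :=
      fun u v => le_min (gDist_le u v) (hHge u v)
    obtain ⟨h, hh, P⟩ := levels (A := A) hs hpos hWs hWw hW hr hm40 hlm' hA0 (by
      intro i hi a ha
      rcases (hAE i).2.2 a ha with ⟨s, hsA, hsE, hd⟩ | hall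
      · left
        refine ⟨s, hsA, ((hWH a s).trans (hHle i hi a s hsE)).trans (hd.trans (le_of_eq ?_))⟩
        rw [ENNReal.ofReal_mul (by norm_num : (0:ℝ) ≤ 2)]
        simp
      · right
        intro b hb hd
        exact (hWH a b).trans (hHle i hi a b (hall b hb hd))) l le_rfl
    have hAl : A l = ∅ := by
      rw [← Finset.card_eq_zero]
      by_contra hne
      have h1 : (1 : ℝ) ≤ (A l).card := by exact_mod_cast Nat.one_le_iff_ne_zero.2 hne
      have h2 := hcnt l
      have h3 := empty_bound hx16 hκ hl2κ
      rw [hxκ] at h3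
      have h4 : 0 < 2 * (x / 2) ^ 2 ^ l := by positivity
      nlinarith
    have hfin : gDist wG u v ≠ ⊤ := ne_top_of_le_ne_top (by simp) hhi
    have hpk : ∀ j : ℕ, (2 : ℝ≥0∞) ^ j = ENNReal.ofReal (2 ^ j) := by
      intro j; rw [ENNReal.ofReal_pow (by norm_num)]; simp
    rw [hpk] at hlo hhi
    have hhi' : dR wG u v ≤ 2 ^ (k + 1) := ENNReal.toReal_le_of_le_ofReal (by positivity) hhi
    have hlo' : (2 : ℝ) ^ k < dR wG u v :=
      (ENNReal.ofReal_lt_iff_lt_toReal (by positivity) hfin).1 hlo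
    rw [hrm] at P
    rcases P u v hfin hhi' with hg | ⟨z, hz, -⟩
    swap
    · simp [hAl] at hz
    have hfinal := hg.mono (b := (1 + ε) * dR wG u v)
      (t := ⌈(39 * (Real.logb 2 κ + 1 / ρ) / ε) ^ (Real.logb 2 κ + 1 / ρ)⌉₊) ?_ ?_
    · rw [HB, ENNReal.ofReal_mul (by linarith), ← dR_spec hfin] at hfinal
      exact hfinal
    · have h1 : h ≤ (m + 4) ^ l := by omega
      refine h1.trans ?_
      have h2 : (((m + 4) ^ l : ℕ) : ℝ) ≤
          (39 * (Real.logb 2 κ + 1 / ρ) / ε) ^ (Real.logb 2 κ + 1 / ρ) := by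
        set L := Real.logb 2 κ + 1 / ρ with hL
        have h3 : (m : ℝ) + 4 ≤ 39 * L / ε := by
          have h4 : (1 : ℝ) ≤ l / ε := by rw [le_div_iff₀ hε0]; linarith
          calc (m : ℝ) + 4 ≤ 34 * l / ε + 5 * (l / ε) := by linarith
            _ = 39 * l / ε := by ring
            _ ≤ 39 * L / ε := by gcongr
        push_cast
        calc ((m : ℝ) + 4) ^ l ≤ (39 * L / ε) ^ l := by gcongr
          _ = (39 * L / ε) ^ (l : ℝ) := (Real.rpow_natCast _ _).symm
          _ ≤ (39 * L / ε) ^ L := Real.rpow_le_rpow_of_exponent_le (by linarith) hlL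
      exact_mod_cast h2.trans (Nat.le_ceil _)
    · have h5 : 17 * (l : ℝ) / m ≤ ε / 2 := by
        rw [div_le_iff₀ hε0] at hm1
        rw [div_le_iff₀ hm0]; linarith
      have h6 : 17 * (l : ℝ) / m * 2 ^ (k + 1) ≤ ε / 2 * 2 ^ (k + 1) := by gcongr
      have h7 : ε / 2 * 2 ^ (k + 1) = ε * 2 ^ k := by rw [pow_succ]; ring
      nlinarith
end
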